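/- Let q be an odd prime power, F a finite field with q elements, and n ≥ 2. Let S be the set of coordinate lines of Fⁿ, i.e., S = {Submodule.span F {Pi.single i 1} : i ∈ Fin n}, and let H be the setwise stabilizer of S in SL(n,F), i.e., {A ∈ SL(n,F) : (fun W => Submodule.map (Matrix.toLin' A) W) '' S = S}. Let H̄ be the image of H in PSLₙ(F) = SL(n,F)/center. Then H̄ is a maximal subgroup of PSLₙ(F) of odd index if and only if q ≡ 1 (mod 4), (n,q) ≠ (4,5), and (n = 2 → q ≥ 13). -/

import Mathlib

/-- The setwise stabilizer in `SL(n, F)` of a set `S` of submodules of `Fⁿ`, consisting of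
those special linear matrices `A` with
`(fun W => Submodule.map (Matrix.toLin' A) W) '' S = S`. -/
def slDecompStabilizer (F : Type*) [Field F] (n : ℕ) (S : Set (Submodule F (Fin n → F))) :
    Subgroup (Matrix.SpecialLinearGroup (Fin n) F) where
  carrier :=
    {A | (fun W => Submodule.map (Matrix.toLin' (A : Matrix (Fin n) (Fin n) F)) W) '' S = S}
  one_mem' := by
    simp [Matrix.SpecialLinearGroup.coe_one, Matrix.toLin'_one]
  mul_mem' := by
    intro A B hA hB
    simp only [Set.mem_setOf_eq] at *
    calc (fun W => Submodule.map
          (Matrix.toLin' ((A * B : Matrix.SpecialLinearGroup (Fin n) F) :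
            Matrix (Fin n) (Fin n) F)) W) '' S
        = (fun W => Submodule.map (Matrix.toLin' (A : Matrix (Fin n) (Fin n) F)) W) ''
            ((fun W => Submodule.map (Matrix.toLin' (B : Matrix (Fin n) (Fin n) F)) W) ''
              S) := by
          rw [← Set.image_comp]
          refine Set.image_congr fun W _ => ?_
          simp [Matrix.SpecialLinearGroup.coe_mul, Matrix.toLin'_mul, Submodule.map_comp]
      _ = S := by rw [hB, hA]
  inv_mem' := by
    intro A hA
    simp only [Set.mem_setOf_eq] at *
    have h1 : ((A⁻¹ : Matrix.SpecialLinearGroup (Fin n) F) : Matrix (Fin n) (Fin n) F) *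
        (A : Matrix (Fin n) (Fin n) F) = 1 := by
      rw [← Matrix.SpecialLinearGroup.coe_mul, inv_mul_cancel,
        Matrix.SpecialLinearGroup.coe_one]
    conv_lhs => rw [← hA]
    rw [← Set.image_comp]
    have : ((fun W => Submodule.map
          (Matrix.toLin' ((A⁻¹ : Matrix.SpecialLinearGroup (Fin n) F) :
            Matrix (Fin n) (Fin n) F)) W) ∘
        (fun W => Submodule.map (Matrix.toLin' (A : Matrix (Fin n) (Fin n) F)) W)) =
        fun W => W := by
      funext W
      simp only [Function.comp_apply, ← Submodule.map_comp, ← Matrix.toLin'_mul, h1,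
        Matrix.toLin'_one, Submodule.map_id]
    rw [this, Set.image_id']

open Matrix

section Monomial

variable {ι F : Type*} [DecidableEq ι] [Field F]

/-- The monomial matrix sending the basis vector `e j` to `d j • e (σ j)`. -/
def monomialMatrix (σ : Equiv.Perm ι) (d : ι → F) : Matrix ι ι F :=
  Matrix.of fun i j => if i = σ j then d j else 0

/-- A matrix is monomial if each row and each column has exactly one nonzero entry. -/
def IsMonomialMatrix (x : Matrix ι ι F) : Prop :=
  ∃ (σ : Equiv.Perm ι) (d : ι → F), (∀ j, d j ≠ 0) ∧ x = monomialMatrix σ d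

theorem monomialMatrix_apply (σ : Equiv.Perm ι) (d : ι → F) (i j : ι) :
    monomialMatrix σ d i j = if i = σ j then d j else 0 := rfl

theorem monomialMatrix_one_eq_diagonal (d : ι → F) :
    monomialMatrix (1 : Equiv.Perm ι) d = diagonal d := by
  ext i j
  by_cases h : i = j
  · subst h; simp [monomialMatrix_apply]
  · simp [monomialMatrix_apply, h]

theorem monomialMatrix_injective {σ τ : Equiv.Perm ι} {d e : ι → F} (hd : ∀ j, d j ≠ 0)
    (h : monomialMatrix σ d = monomialMatrix τ e) : σ = τ := by
  ext j
  by_contra hne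
  have := congrFun (congrFun h (σ j)) j
  simp [monomialMatrix_apply, hne, hd j] at this

theorem smul_monomialMatrix (c : F) (σ : Equiv.Perm ι) (d : ι → F) :
    c • monomialMatrix σ d = monomialMatrix σ (fun j => c * d j) := by
  ext i j
  by_cases h : i = σ j <;> simp [monomialMatrix_apply, h]

variable [Fintype ι]

theorem monomialMatrix_mul_apply (σ : Equiv.Perm ι) (d : ι → F) (x : Matrix ι ι F) (i k : ι) :
    (monomialMatrix σ d * x) i k = d (σ⁻¹ i) * x (σ⁻¹ i) k := by
  rw [Matrix.mul_apply, Finset.sum_eq_single (σ⁻¹ i)]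
  · simp [monomialMatrix_apply]
  · intro b _ hb
    have : i ≠ σ b := by rintro rfl; simp at hb
    simp [monomialMatrix_apply, this]
  · simp

theorem mul_monomialMatrix_apply (σ : Equiv.Perm ι) (d : ι → F) (x : Matrix ι ι F) (i k : ι) :
    (x * monomialMatrix σ d) i k = x i (σ k) * d k := by
  rw [Matrix.mul_apply, Finset.sum_eq_single (σ k)]
  · simp [monomialMatrix_apply]
  · intro b _ hb
    simp [monomialMatrix_apply, hb]
  · simp

theorem monomialMatrix_mul (σ τ : Equiv.Perm ι) (d e : ι → F) :
    monomialMatrix σ d * monomialMatrix τ e =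
      monomialMatrix (σ * τ) fun j => d (τ j) * e j := by
  ext i k
  rw [mul_monomialMatrix_apply]
  by_cases h : i = σ (τ k) <;> simp [monomialMatrix_apply, h]

theorem det_monomialMatrix (σ : Equiv.Perm ι) (d : ι → F) :
    (monomialMatrix σ d).det = (Equiv.Perm.sign σ : ℤ) * ∏ j, d j := by
  have : monomialMatrix σ d = (diagonal d).submatrix (σ⁻¹ : Equiv.Perm ι) id := by
    ext i j
    simp only [monomialMatrix_apply, submatrix_apply, id, diagonal_apply]
    by_cases h : i = σ j
    · subst h; simp
    · have : ¬ (σ⁻¹ i = j) := by rintro rfl; simp at h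
      rw [if_neg h, if_neg this]
  rw [this, Matrix.det_permute, det_diagonal]
  simp

theorem det_monomialMatrix_ne_zero (σ : Equiv.Perm ι) {d : ι → F} (hd : ∀ j, d j ≠ 0) :
    (monomialMatrix σ d).det ≠ 0 := by
  rw [det_monomialMatrix]
  refine mul_ne_zero ?_ (Finset.prod_ne_zero_iff.mpr fun j _ => hd j)
  rcases Int.units_eq_one_or (Equiv.Perm.sign σ) with h | h <;> simp [h]

theorem monomialMatrix_mul_inv (σ : Equiv.Perm ι) {d : ι → F} (hd : ∀ j, d j ≠ 0) :
    monomialMatrix σ d * monomialMatrix σ⁻¹ (fun i => (d (σ⁻¹ i))⁻¹) = 1 := by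
  rw [monomialMatrix_mul]
  simp [hd, monomialMatrix_one_eq_diagonal]

theorem IsMonomialMatrix.mul {x y : Matrix ι ι F} (hx : IsMonomialMatrix x)
    (hy : IsMonomialMatrix y) : IsMonomialMatrix (x * y) := by
  obtain ⟨σ, d, hd, rfl⟩ := hx
  obtain ⟨τ, e, he, rfl⟩ := hy
  exact ⟨_, _, fun j => mul_ne_zero (hd _) (he _), monomialMatrix_mul ..⟩

theorem IsMonomialMatrix.of_mul_eq_one {x y : Matrix ι ι F} (hx : IsMonomialMatrix x)
    (hxy : x * y = 1) : IsMonomialMatrix y := by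
  obtain ⟨σ, d, hd, rfl⟩ := hx
  refine ⟨σ⁻¹, fun i => (d (σ⁻¹ i))⁻¹, fun j => inv_ne_zero (hd _), ?_⟩
  exact (left_inv_eq_right_inv (mul_eq_one_comm.mp (monomialMatrix_mul_inv σ hd)) hxy).symm ▸ rfl

theorem isMonomialMatrix_of_column {x y : Matrix ι ι F} (hxy : x * y = 1)
    (h : ∀ j, ∃ i, ∀ k, k ≠ i → x k j = 0) : IsMonomialMatrix x := by
  choose f hf using h
  have hsurj : Function.Surjective f := by
    intro i
    by_contra! hi
    have h1 : (x * y) i i = 1 := by simp [hxy]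
    rw [Matrix.mul_apply, Finset.sum_eq_zero fun j _ => by rw [hf j i (hi j).symm, zero_mul]] at h1
    exact zero_ne_one h1
  have hyx : y * x = 1 := mul_eq_one_comm.mp hxy
  refine ⟨Equiv.ofBijective f (Finite.injective_iff_bijective.mp
    (Finite.injective_iff_surjective.mpr hsurj)), fun j => x (f j) j, fun j h0 => ?_, ?_⟩
  · have h1 : (y * x) j j = 1 := by simp [hyx]
    rw [Matrix.mul_apply, Finset.sum_eq_zero] at h1
    · exact zero_ne_one h1
    · intro k _
      by_cases hk : k = f j
      · subst hk
        exact mul_eq_zero_of_right _ h0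
      · rw [hf j k hk, mul_zero]
  · ext i j
    by_cases hi : i = f j
    · simp [monomialMatrix_apply, hi]
    · simp [monomialMatrix_apply, hi, hf j i hi]

/-- A non-monomial invertible matrix has a column with two nonzero entries. -/
theorem exists_column_of_not_isMonomialMatrix {x y : Matrix ι ι F} (hxy : x * y = 1)
    (hx : ¬ IsMonomialMatrix x) : ∃ j i l, i ≠ l ∧ x i j ≠ 0 ∧ x l j ≠ 0 := by
  by_contra! h
  refine hx (isMonomialMatrix_of_column hxy fun j => ?_)
  by_cases h0 : ∃ i, x i j ≠ 0
  · obtain ⟨i, hi⟩ := h0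
    exact ⟨i, fun k hk => h j i k hk.symm hi⟩
  · push Not at h0
    exact ⟨j, fun k _ => h0 k⟩

end Monomial

theorem Equiv.Perm.exists_apply_pair_eq {ι : Type*} [DecidableEq ι] {i j k l : ι} (hij : i ≠ j)
    (hkl : k ≠ l) : ∃ σ : Equiv.Perm ι, σ i = k ∧ σ j = l := by
  refine ⟨Equiv.swap (Equiv.swap i k j) l * Equiv.swap i k, ?_, ?_⟩
  · rw [Equiv.Perm.mul_apply, Equiv.swap_apply_left, Equiv.swap_apply_of_ne_of_ne _ hkl]
    exact fun h => hij (by simpa using congrArg (Equiv.swap i k) h)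
  · simp

section FieldElements

variable {F : Type*} [Field F] [Fintype F]

open Polynomial in
/-- A nonzero polynomial of degree less than `|F|` does not vanish somewhere. -/
theorem exists_eval_ne_zero_of_natDegree_lt_card (f : F[X]) (hf : f ≠ 0)
    (hdeg : f.natDegree < Fintype.card F) : ∃ a : F, f.eval a ≠ 0 := by
  by_contra! h
  refine hf (Polynomial.eq_zero_of_natDegree_lt_card_of_eval_eq_zero' f Finset.univ
    (fun a _ => h a) (by simpa using hdeg))

end FieldElements

section GeneralLinear

variable {ι F : Type*} [DecidableEq ι] [Field F]

theorem update_one_ne_zero (j : ι) {ε : F} (hε : ε ≠ 0) (k : ι) :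
    Function.update (1 : ι → F) j ε k ≠ 0 := by
  by_cases hk : k = j
  · subst hk; simpa
  · simp [hk]

variable [Fintype ι]

/-- The monoid `G` of matrices contains a nontrivial elementary transvection. -/
def HasTransvection (G : Submonoid (Matrix ι ι F)) : Prop :=
  ∃ i j, i ≠ j ∧ ∃ a : F, a ≠ 0 ∧ transvection i j a ∈ G

theorem conj_diagonal_update_apply {x y : Matrix ι ι F} (hxy : x * y = 1) (j : ι) (ε : F)
    (k l : ι) : (x * diagonal (Function.update 1 j ε) * y) k l =
      (1 : Matrix ι ι F) k l + (ε - 1) * (x k j * y j l) := by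
  have hd : diagonal (Function.update 1 j ε) = (1 : Matrix ι ι F) + single j j (ε - 1) := by
    ext a b
    by_cases hab : a = b
    · subst hab
      by_cases ha : a = j
      · subst ha; simp
      · have : ¬ (j = a) := fun h => ha h.symm
        simp [ha, this]
    · have : ¬ (j = a ∧ j = b) := fun h => hab (h.1.symm.trans h.2)
      simp [hab, this]
  rw [hd, mul_add, add_mul, mul_one, hxy, Matrix.add_apply, mul_apply,
    Finset.sum_eq_single j]
  · simp; ring
  · intro b _ hb
    simp [hb]
  · simp

theorem conj_diagonal_update_mul_inv {x y : Matrix ι ι F} (hxy : x * y = 1) (j : ι) {ε : F}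
    (hε : ε ≠ 0) : (x * diagonal (Function.update 1 j ε) * y) *
      (x * diagonal (Function.update 1 j ε⁻¹) * y) = 1 := by
  have hyx : y * x = 1 := mul_eq_one_comm.mp hxy
  have hd : diagonal (Function.update 1 j ε) * diagonal (Function.update 1 j ε⁻¹) =
      (1 : Matrix ι ι F) := by
    rw [diagonal_mul_diagonal, ← diagonal_one]
    congr 1
    ext k
    by_cases hk : k = j
    · subst hk; simp [hε]
    · simp [hk]
  calc _ = x * diagonal (Function.update 1 j ε) * (y * x) *
        diagonal (Function.update 1 j ε⁻¹) * y := by simp only [mul_assoc]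
    _ = x * (diagonal (Function.update 1 j ε) * diagonal (Function.update 1 j ε⁻¹)) * y := by
        rw [hyx, mul_one]; simp only [mul_assoc]
    _ = 1 := by rw [hd, mul_one, hxy]

theorem commutator_reflection_identity {R : Type*} [Ring R] {e E f : R} (he : e * e = e)
    (hE : E * E = E) (heE : e * E = 0) (hef : e * f = 0) (hf : f * f = f) :
    (1 - 2 * f) * (((1 - 2 * e) * (1 - 2 * E)) * ((1 - 2 * e) * (1 - 2 * E))) * (1 - 2 * f) *
      (((1 - 2 * E) * (1 - 2 * e)) * ((1 - 2 * E) * (1 - 2 * e))) = 1 - 8 * (f * E * e) := by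
  have h1 : (1 - 2 * e) * (1 - 2 * E) = 1 - 2 * e - 2 * E := by
    have : (1 - 2 * e) * (1 - 2 * E) = 1 - 2 * e - 2 * E + 4 * (e * E) := by noncomm_ring
    rw [this, heE]; simp
  have h2 : (1 - 2 * e - 2 * E) * (1 - 2 * e - 2 * E) = 1 + 4 * (E * e) := by
    have : (1 - 2 * e - 2 * E) * (1 - 2 * e - 2 * E) = 1 - 4 * e - 4 * E + 4 * (e * e) +
      4 * (E * E) + 4 * (e * E) + 4 * (E * e) := by noncomm_ring
    rw [this, heE, he, hE]; noncomm_ring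
  have h3 : (1 - 2 * E) * (1 - 2 * e) = 1 - 2 * e - 2 * E + 4 * (E * e) := by noncomm_ring
  have hN : E * e * (E * e) = 0 := by
    rw [mul_assoc, ← mul_assoc e, heE]; simp
  have h4 : (1 - 2 * e - 2 * E + 4 * (E * e)) * (1 - 2 * e - 2 * E + 4 * (E * e)) =
      1 - 4 * (E * e) := by
    have : (1 - 2 * e - 2 * E + 4 * (E * e)) * (1 - 2 * e - 2 * E + 4 * (E * e)) =
      (1 - 2 * e - 2 * E) * (1 - 2 * e - 2 * E) + 8 * (E * e) - 8 * (e * E * e)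
        - 8 * (E * (e * e)) - 8 * ((E * E) * e) - 8 * (E * (e * E)) + 16 * (E * e * (E * e)) := by
      noncomm_ring
    rw [this, h2, heE, he, hE, hN]; noncomm_ring
  have h5 : (1 - 2 * f) * (1 + 4 * (E * e)) * (1 - 2 * f) = 1 + 4 * (E * e) - 8 * (f * E * e) := by
    have : (1 - 2 * f) * (1 + 4 * (E * e)) * (1 - 2 * f) = 1 + 4 * (E * e) - 8 * (f * E * e)
      - 4 * f + 4 * (f * f) - 8 * (E * (e * f)) + 16 * (f * E * (e * f)) := by noncomm_ring
    rw [this, hef, hf]; noncomm_ring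
  rw [h1, h2, h3, h4, h5]
  have : (1 + 4 * (E * e) - 8 * (f * E * e)) * (1 - 4 * (E * e)) = 1 - 8 * (f * E * e)
    - 16 * (E * e * (E * e)) + 32 * (f * (E * e * (E * e))) := by noncomm_ring
  rw [this, hN]; simp

/-- The monoid `G` of matrices contains all invertible monomial matrices. -/
def ContainsMonomials (G : Submonoid (Matrix ι ι F)) : Prop :=
  ∀ (σ : Equiv.Perm ι) (d : ι → F), (∀ j, d j ≠ 0) → monomialMatrix σ d ∈ G

variable {G : Submonoid (Matrix ι ι F)}

theorem diagonal_mem_of_monomialMatrix_mem (hmon : ContainsMonomials G) {d : ι → F}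
    (hd : ∀ j, d j ≠ 0) : diagonal d ∈ G :=
  monomialMatrix_one_eq_diagonal d ▸ hmon 1 d hd

theorem diagonal_update_neg_one (i : ι) :
    diagonal (Function.update 1 i (-1)) = (1 : Matrix ι ι F) - 2 * single i i 1 := by
  have h := conj_diagonal_update_apply (mul_one (1 : Matrix ι ι F)) i (-1)
  ext k l
  have := h k l
  rw [one_mul, mul_one] at this
  rw [this, Matrix.sub_apply, two_mul, Matrix.add_apply]
  by_cases hk : k = i
  · subst hk
    by_cases hl : k = l
    · subst hl; simp
    · simp [hl]
  · have : ¬ (i = k) := fun h => hk h.symm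
    simp [hk, this, one_apply]

theorem hasTransvection_of_entry_eq_zero (hmon : ContainsMonomials G) (h2 : (2 : F) ≠ 0)
    {x y : Matrix ι ι F} (hx : x ∈ G)
    (hy : y ∈ G) (hxy : x * y = 1) {i j : ι} (hij : x i j = 0) (hji : y j i ≠ 0) :
    HasTransvection G := by
  have hyx : y * x = 1 := mul_eq_one_comm.mp hxy
  obtain ⟨l, hl⟩ : ∃ l, x l j ≠ 0 := by
    by_contra! h
    have h1 : (y * x) j j = 1 := by simp [hyx]
    rw [Matrix.mul_apply, Finset.sum_eq_zero fun k _ => by rw [h k, mul_zero]] at h1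
    exact zero_ne_one h1
  have hli : l ≠ i := by rintro rfl; exact hl hij
  have hneg : (-1 : F) ≠ 0 := neg_ne_zero.mpr one_ne_zero
  have hmem (k : ι) : (1 : Matrix ι ι F) - 2 * single k k 1 ∈ G := by
    rw [← diagonal_update_neg_one]
    exact diagonal_mem_of_monomialMatrix_mem hmon (update_one_ne_zero k hneg)
  set E := x * single j j 1 * y with hE
  have hEmem : 1 - 2 * E ∈ G := by
    have : 1 - 2 * E = x * (1 - 2 * single j j 1) * y := by
      rw [mul_sub, sub_mul, mul_one, hxy, hE]; noncomm_ring
    rw [this]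
    exact G.mul_mem (G.mul_mem hx (hmem j)) hy
  have hEE : E * E = E := by
    calc E * E = x * single j j 1 * (y * x) * single j j 1 * y := by
          simp only [hE, mul_assoc]
      _ = x * (single j j 1 * single j j 1) * y := by rw [hyx, mul_one]; simp only [mul_assoc]
      _ = E := by simp [hE]
  have heE : single i i 1 * E = 0 := by
    rw [hE, ← mul_assoc, ← mul_assoc]
    simp [hij]
  have key := commutator_reflection_identity (e := single i i (1 : F)) (E := E)
    (f := single l l (1 : F)) (by simp) hEE heE (by simp [hli.symm]) (by simp)
  refine ⟨l, i, hli, -8 * (x l j * y j i), ?_, ?_⟩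
  · refine mul_ne_zero ?_ (mul_ne_zero hl hji)
    have : (-8 : F) = -(2 * 2 * 2) := by norm_num
    rw [this]
    exact neg_ne_zero.mpr (mul_ne_zero (mul_ne_zero h2 h2) h2)
  · have hval : transvection l i (-8 * (x l j * y j i)) =
        1 - 8 * (single l l 1 * E * single i i 1) := by
      have : single l l 1 * E * single i i 1 = single l i (x l j * y j i) := by
        have h3 : E l i = x l j * y j i := by
          rw [hE, mul_apply, Finset.sum_eq_single j]
          · simp
          · intro b _ hb; simp [hb]
          · simp
        simp [h3]
      rw [this, transvection, sub_eq_add_neg]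
      congr 1
      rw [← Nat.cast_ofNat (R := Matrix ι ι F), ← nsmul_eq_mul, smul_single, single_neg]
      congr 1
      rw [nsmul_eq_mul]; push_cast; ring
    rw [hval, ← key]
    have hi := hmem i
    exact G.mul_mem (G.mul_mem (G.mul_mem (hmem l) (G.mul_mem (G.mul_mem hi hEmem)
      (G.mul_mem hi hEmem))) (hmem l))
      (G.mul_mem (G.mul_mem hEmem hi) (G.mul_mem hEmem hi))

theorem hasTransvection_of_mul_entry (hmon : ContainsMonomials G) (h2 : (2 : F) ≠ 0)
    {x y : Matrix ι ι F} (hx : x ∈ G)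
    (hy : y ∈ G) (hxy : x * y = 1) {i j : ι} (h0 : x i j * y j i ≠ 0) (h1 : x i j * y j i ≠ 1)
    (hhalf : 2 * (x i j * y j i) ≠ 1) : HasTransvection G := by
  set c := x i j * y j i with hc
  have hε : 1 - c⁻¹ ≠ 0 := fun h => h1 (by rw [sub_eq_zero] at h; exact inv_eq_one.mp h.symm)
  have hmem {ε : F} (hε : ε ≠ 0) : x * diagonal (Function.update 1 j ε) * y ∈ G :=
    G.mul_mem (G.mul_mem hx
      (diagonal_mem_of_monomialMatrix_mem hmon (update_one_ne_zero j hε))) hy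
  have hc1 : c - 1 ≠ 0 := sub_ne_zero.mpr h1
  refine hasTransvection_of_entry_eq_zero hmon h2 (hmem hε) (hmem (inv_ne_zero hε))
    (conj_diagonal_update_mul_inv hxy j hε) (i := i) (j := i) ?_ ?_
  · rw [conj_diagonal_update_apply hxy, ← hc, one_apply_eq]
    field_simp; ring
  · rw [conj_diagonal_update_apply hxy, ← hc, one_apply_eq]
    have : 1 + ((1 - c⁻¹)⁻¹ - 1) * c = (2 * c - 1) / (c - 1) := by
      field_simp; ring
    rw [this]
    exact div_ne_zero (sub_ne_zero.mpr hhalf) hc1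

end GeneralLinear

section FieldElements

variable {F : Type*} [Field F] [Fintype F]

open Polynomial in
theorem exists_ne_zero_reflection_trace (h2 : (2 : F) ≠ 0)
    (hF : 5 = Fintype.card F ∨ 7 ≤ Fintype.card F)
    {c : F} (hc : c = 1 ∨ 2 * c = 1) :
    ∃ ε : F, ε ≠ 0 ∧ (ε - 1) * (ε⁻¹ - 1) * c ≠ 0 ∧ (ε - 1) * (ε⁻¹ - 1) * c ≠ 1 ∧
      2 * ((ε - 1) * (ε⁻¹ - 1) * c) ≠ 1 := by
  have hc0 : c ≠ 0 := by rintro rfl; simp at hc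
  rcases hF with hF | hF
  · have h5 : (5 : F) = 0 := by
      have := Nat.cast_card_eq_zero F
      rw [← hF] at this; exact_mod_cast this
    refine ⟨-1, by simp, ?_⟩
    have : ((-1 : F) - 1) * ((-1)⁻¹ - 1) * c = 2 * (2 * c) := by rw [inv_neg, inv_one]; ring
    rw [this]
    have h1 : (1 : F) ≠ 0 := one_ne_zero
    rcases hc with rfl | hc
    · refine ⟨mul_ne_zero h2 (mul_ne_zero h2 hc0), fun h => h2 ?_, fun h => h2 ?_⟩
      · linear_combination h5 - h
      · linear_combination h - h5
    · rw [hc]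
      refine ⟨by simpa, fun h => h1 ?_, fun h => h2 ?_⟩
      · linear_combination h
      · linear_combination -h + h5
  · obtain ⟨ε, hε⟩ := exists_eval_ne_zero_of_natDegree_lt_card
      ((X * (X - 1)) * ((C c * (X - 1) ^ 2 + X) * (C (2 * c) * (X - 1) ^ 2 + X)) : F[X]) (by
        refine mul_ne_zero (mul_ne_zero X_ne_zero ?_) (mul_ne_zero ?_ ?_)
        · exact X_sub_C_ne_zero (1 : F)
        · intro h; exact hc0 (by simpa using congrArg (eval 0) h)
        · intro h; exact mul_ne_zero h2 hc0 (by simpa using congrArg (eval 0) h)) (by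
        refine lt_of_le_of_lt ?_ hF
        compute_degree)
    simp only [eval_mul, mul_ne_zero_iff] at hε
    obtain ⟨⟨h1, h2'⟩, h3, h4⟩ := hε
    simp only [eval_X, eval_sub, eval_add, eval_one, eval_pow, eval_mul, eval_C] at h1 h2' h3 h4
    refine ⟨ε, h1, mul_ne_zero (mul_ne_zero h2' ?_) hc0, fun h => h3 ?_, fun h => h4 ?_⟩
    · intro h; apply h2'; field_simp at h; linear_combination -h
    · field_simp at h; linear_combination -h
    · field_simp at h; linear_combination -h

open Polynomial in
theorem exists_ne_zero_half_trace (h2 : (2 : F) ≠ 0) (hF : 7 ≤ Fintype.card F)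
    {c : F} (hc : 2 * c = 1) :
    ∃ ε : F, ε ≠ 0 ∧ (1 + (ε - 1) * c) * (1 + (ε⁻¹ - 1) * c) ≠ 0 ∧
      (1 + (ε - 1) * c) * (1 + (ε⁻¹ - 1) * c) ≠ 1 ∧
      2 * ((1 + (ε - 1) * c) * (1 + (ε⁻¹ - 1) * c)) ≠ 1 := by
  obtain ⟨ε, hε⟩ := exists_eval_ne_zero_of_natDegree_lt_card
    ((X * (X - 1)) * ((X + 1) * (X ^ 2 + 1)) : F[X]) (by
      refine mul_ne_zero (mul_ne_zero X_ne_zero ?_) (mul_ne_zero ?_ ?_)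
      · exact X_sub_C_ne_zero (1 : F)
      · intro h; simpa using congrArg (eval 0) h
      · intro h; simpa using congrArg (eval 0) h) (by
      refine lt_of_le_of_lt (b := 5) ?_ (by omega)
      compute_degree)
  simp only [eval_mul, mul_ne_zero_iff] at hε
  obtain ⟨⟨h1, h2'⟩, h3, h4⟩ := hε
  simp only [eval_X, eval_sub, eval_add, eval_one, eval_pow] at h1 h2' h3 h4
  have hc' : c = 1 / 2 := by field_simp; linear_combination hc
  have key : (1 + (ε - 1) * c) * (1 + (ε⁻¹ - 1) * c) = (ε + 1) ^ 2 / (4 * ε) := by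
    rw [hc']
    have h4 : (4 : F) = 2 * 2 := by norm_num
    rw [h4]
    field_simp; ring
  have h4' : (4 : F) ≠ 0 := by
    have h4 : (4 : F) = 2 * 2 := by norm_num
    rw [h4]; exact mul_ne_zero h2 h2
  refine ⟨ε, h1, ?_⟩
  rw [key]
  refine ⟨div_ne_zero (pow_ne_zero _ h3) (mul_ne_zero h4' h1), fun h => ?_, fun h => h4 ?_⟩
  · rw [div_eq_one_iff_eq (mul_ne_zero h4' h1)] at h
    exact pow_ne_zero 2 h2' (by linear_combination h)
  · rw [mul_div_assoc', div_eq_one_iff_eq (mul_ne_zero h4' h1)] at h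
    exact mul_left_cancel₀ h2 (by linear_combination h)

end FieldElements

section GeneralLinear

variable {ι F : Type*} [DecidableEq ι] [Fintype ι] [Field F] {G : Submonoid (Matrix ι ι F)}

theorem hasTransvection_of_mul_entry_eq_one [Fintype F] (hmon : ContainsMonomials G)
    (h2 : (2 : F) ≠ 0) (hF : 5 = Fintype.card F ∨ 7 ≤ Fintype.card F)
    {x y : Matrix ι ι F} (hx : x ∈ G) (hy : y ∈ G) (hxy : x * y = 1) {i j l : ι} (hil : l ≠ i)
    (h1 : x i j * y j i = 1) (hl : x l j ≠ 0) : HasTransvection G := by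
  by_contra hG
  have hl' : y j l ≠ 0 := fun h0 =>
    hG (hasTransvection_of_entry_eq_zero hmon h2 hy hx (mul_eq_one_comm.mp hxy) h0 hl)
  have hc : x l j * y j l = 1 ∨ 2 * (x l j * y j l) = 1 := by
    by_contra! h
    exact hG (hasTransvection_of_mul_entry hmon h2 hx hy hxy (mul_ne_zero hl hl') h.1 h.2)
  obtain ⟨ε, hε, hne⟩ := exists_ne_zero_reflection_trace h2 hF hc
  have hmem {ε : F} (hε : ε ≠ 0) : x * diagonal (Function.update 1 j ε) * y ∈ G :=
    G.mul_mem (G.mul_mem hx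
      (diagonal_mem_of_monomialMatrix_mem hmon (update_one_ne_zero j hε))) hy
  have key : (x * diagonal (Function.update 1 j ε) * y) l i *
      (x * diagonal (Function.update 1 j ε⁻¹) * y) i l =
        (ε - 1) * (ε⁻¹ - 1) * (x l j * y j l) := by
    rw [conj_diagonal_update_apply hxy, conj_diagonal_update_apply hxy, one_apply_ne hil,
      one_apply_ne hil.symm]
    linear_combination (ε - 1) * (ε⁻¹ - 1) * (x l j * y j l) * h1
  refine hG (hasTransvection_of_mul_entry hmon h2 (hmem hε) (hmem (inv_ne_zero hε))
    (conj_diagonal_update_mul_inv hxy j hε) (i := l) (j := i) ?_ ?_ ?_)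
  · rw [key]; exact hne.1
  · rw [key]; exact hne.2.1
  · rw [key]; exact hne.2.2

theorem hasTransvection_of_mul_entry_eq_half [Fintype F] (hmon : ContainsMonomials G)
    (h2 : (2 : F) ≠ 0) (hF : 7 ≤ Fintype.card F)
    {x y : Matrix ι ι F} (hx : x ∈ G) (hy : y ∈ G) (hxy : x * y = 1) {i j : ι}
    (h1 : 2 * (x i j * y j i) = 1) : HasTransvection G := by
  obtain ⟨ε, hε, hne⟩ := exists_ne_zero_half_trace h2 hF h1
  have hmem {ε : F} (hε : ε ≠ 0) : x * diagonal (Function.update 1 j ε) * y ∈ G :=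
    G.mul_mem (G.mul_mem hx
      (diagonal_mem_of_monomialMatrix_mem hmon (update_one_ne_zero j hε))) hy
  refine hasTransvection_of_mul_entry hmon h2 (hmem hε) (hmem (inv_ne_zero hε))
    (conj_diagonal_update_mul_inv hxy j hε) (i := i) (j := i) ?_ ?_ ?_ <;>
  rw [conj_diagonal_update_apply hxy, conj_diagonal_update_apply hxy, one_apply_eq]
  exacts [hne.1, hne.2.1, hne.2.2]

theorem hasTransvection_of_card_eq_five [Fintype F] (hmon : ContainsMonomials G)
    (hF : Fintype.card F = 5) (hι : 3 ≤ Fintype.card ι)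
    {x y : Matrix ι ι F} (hx : x ∈ G) (hy : y ∈ G) (hxy : x * y = 1) {i j l : ι} (hil : l ≠ i)
    (hi : x i j ≠ 0) (hl : x l j ≠ 0) : HasTransvection G := by
  have h5 : (5 : F) = 0 := by
    have := Nat.cast_card_eq_zero F
    rw [hF] at this; exact_mod_cast this
  have h2 : (2 : F) ≠ 0 := fun h => one_ne_zero (α := F) (by linear_combination h5 - 2 * h)
  have hyx : y * x = 1 := mul_eq_one_comm.mp hxy
  by_contra hG
  have hsupp (k : ι) (hk : x k j ≠ 0) : y j k ≠ 0 := fun h0 =>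
    hG (hasTransvection_of_entry_eq_zero hmon h2 hy hx hyx h0 hk)
  have hhalf (k : ι) (hk : x k j ≠ 0) : y j k * x k j = 3 := by
    by_contra h3
    have h3' : 2 * (x k j * y j k) ≠ 1 := fun h =>
      h3 (by linear_combination 3 * h - x k j * y j k * h5)
    refine hG (hasTransvection_of_mul_entry hmon h2 hx hy hxy (mul_ne_zero hk (hsupp k hk))
      (fun h1 => ?_) h3')
    by_cases hki : k = i
    · exact hG (hasTransvection_of_mul_entry_eq_one hmon h2 (Or.inl hF.symm) hx hy hxy
        (hki ▸ hil) h1 hl)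
    · exact hG (hasTransvection_of_mul_entry_eq_one hmon h2 (Or.inl hF.symm) hx hy hxy
        (Ne.symm hki) h1 hi)
  have hsum : ∑ k, y j k * x k j = 1 := by
    rw [← mul_apply, hyx, one_apply_eq]
  obtain ⟨m, hm⟩ : ∃ m, m ∉ ({i, l} : Finset ι) := by
    by_contra! h
    have := Finset.card_le_card (fun a _ => h a : (Finset.univ : Finset ι) ⊆ {i, l})
    have h' := Finset.card_le_two (a := i) (b := l)
    rw [Finset.card_univ] at this
    omega
  simp only [Finset.mem_insert, Finset.mem_singleton, not_or] at hm
  obtain ⟨hmi, hml⟩ := hm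
  by_cases hmj : x m j = 0
  · have hym : y j m = 0 := by
      by_contra h
      exact hG (hasTransvection_of_entry_eq_zero hmon h2 hx hy hxy hmj h)
    set g : Matrix ι ι F := monomialMatrix (Equiv.swap i m) 1 with hg
    have hgG : g ∈ G := hmon _ _ (by simp)
    have hgg : g * g = 1 := by
      rw [hg, monomialMatrix_mul]
      simp [monomialMatrix_one_eq_diagonal]
    have hent : (y * g * x) j j = 3 := by
      have : (y * g * x) j j - 1 = -3 := by
        rw [mul_apply, ← hsum, ← Finset.sum_sub_distrib, Finset.sum_eq_single i]
        · rw [mul_monomialMatrix_apply, Equiv.swap_apply_left, hym, hhalf i hi]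
          simp
        · intro k _ hk
          rw [mul_monomialMatrix_apply]
          by_cases hkm : k = m
          · subst hkm; simp [hmj]
          · simp [Equiv.swap_apply_of_ne_of_ne hk hkm]
        · simp
      linear_combination this - h5
    have hinv : (y * g * x) * (y * g * x) = 1 := by
      calc _ = y * g * (x * y) * g * x := by simp only [mul_assoc]
        _ = y * (g * g) * x := by rw [hxy, mul_one]; simp only [mul_assoc]
        _ = 1 := by rw [hgg, mul_one, hyx]
    have hmem : y * g * x ∈ G := G.mul_mem (G.mul_mem hy hgG) hx
    refine hG (hasTransvection_of_mul_entry hmon h2 hmem hmem hinv (i := j) (j := j)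
      ?_ ?_ ?_) <;> rw [hent] <;> intro h
    · exact one_ne_zero (α := F) (by linear_combination 2 * h5 - h)
    · exact h2 (by linear_combination 2 * h5 - h)
    · exact h2 (by linear_combination h - 3 * h5)
  · have hent (b : F) : (y * diagonal (fun k => if k = i ∨ k = l ∨ k = m then b else 1) * x) j j =
        1 + (b - 1) * 9 := by
      have : (y * diagonal (fun k => if k = i ∨ k = l ∨ k = m then b else 1) * x) j j =
          ∑ k, (y j k * x k j + (b - 1) * ((if k = i then y j k * x k j else 0) +
            (if k = l then y j k * x k j else 0) + (if k = m then y j k * x k j else 0))) := by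
        rw [mul_apply]
        refine Finset.sum_congr rfl fun k _ => ?_
        rw [mul_diagonal]
        by_cases h1 : k = i
        · subst h1; simp [hil.symm, Ne.symm hmi]; ring
        by_cases h2 : k = l
        · subst h2; simp [hil, Ne.symm hml]; ring
        by_cases h3 : k = m
        · subst h3; simp [hmi, hml]; ring
        simp [h1, h2, h3]
      rw [this]
      simp only [Finset.sum_add_distrib, ← Finset.mul_sum, hsum, Finset.sum_ite_eq',
        Finset.mem_univ, if_true, hhalf i hi, hhalf l hl, hhalf m hmj]
      norm_num
    have hmem {b : F} (hb : b ≠ 0) :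
        y * diagonal (fun k => if k = i ∨ k = l ∨ k = m then b else 1) * x ∈ G :=
      G.mul_mem (G.mul_mem hy (diagonal_mem_of_monomialMatrix_mem hmon fun k => by
        split_ifs <;> simp [hb])) hx
    have h3 : (3 : F) ≠ 0 := fun h => one_ne_zero (α := F) (by linear_combination 2 * h - h5)
    have hinv : (y * diagonal (fun k => if k = i ∨ k = l ∨ k = m then (2 : F) else 1) * x) *
        (y * diagonal (fun k => if k = i ∨ k = l ∨ k = m then (3 : F) else 1) * x) = 1 := by
      calc _ = y * diagonal (fun k => if k = i ∨ k = l ∨ k = m then (2 : F) else 1) * (x * y) *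
            diagonal (fun k => if k = i ∨ k = l ∨ k = m then (3 : F) else 1) * x := by
            simp only [mul_assoc]
        _ = y * (diagonal (fun k => if k = i ∨ k = l ∨ k = m then (2 : F) else 1) *
            diagonal (fun k => if k = i ∨ k = l ∨ k = m then (3 : F) else 1)) * x := by
            rw [hxy, mul_one]; simp only [mul_assoc]
        _ = y * 1 * x := by
            rw [diagonal_mul_diagonal, ← diagonal_one]
            congr 3
            ext k
            split_ifs
            · linear_combination h5
            · ring
        _ = 1 := by rw [mul_one, hyx]
    refine hG (hasTransvection_of_entry_eq_zero hmon h2 (hmem h2) (hmem h3) hinv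
      (i := j) (j := j) ?_ ?_) <;> rw [hent]
    · linear_combination 2 * h5
    · intro h; exact one_ne_zero (α := F) (by linear_combination 4 * h5 - h)

/-- A matrix group properly containing all invertible monomial matrices contains an elementary
transvection. -/
theorem hasTransvection_of_not_isMonomialMatrix [Fintype F] (hmon : ContainsMonomials G)
    (h2 : (2 : F) ≠ 0)
    (hF : 7 ≤ Fintype.card F ∨ Fintype.card F = 5 ∧ 3 ≤ Fintype.card ι)
    {x y : Matrix ι ι F} (hx : x ∈ G) (hy : y ∈ G) (hxy : x * y = 1)
    (hxm : ¬ IsMonomialMatrix x) : HasTransvection G := by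
  obtain ⟨j, i, l, hil, hi, hl⟩ := exists_column_of_not_isMonomialMatrix hxy hxm
  rcases hF with hF | ⟨hF, hι⟩
  · by_contra hG
    have h0 : y j i ≠ 0 := fun h0 => hG (hasTransvection_of_entry_eq_zero hmon h2 hy hx
      (mul_eq_one_comm.mp hxy) h0 hi)
    refine hG (hasTransvection_of_mul_entry hmon h2 hx hy hxy (mul_ne_zero hi h0)
      (fun h1 => ?_) (fun h1 => ?_))
    · exact hG (hasTransvection_of_mul_entry_eq_one hmon h2 (Or.inr hF) hx hy hxy hil.symm h1 hl)
    · exact hG (hasTransvection_of_mul_entry_eq_half hmon h2 hF hx hy hxy h1)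
  · exact hasTransvection_of_card_eq_five hmon hF hι hx hy hxy hil.symm hi hl

end GeneralLinear

section SpecialLinear

variable {ι F : Type*} [DecidableEq ι] [Field F]

/-- The unipotent matrix agreeing with the identity outside row `o`, and whose row `o` is
that of the identity plus `r`. -/
def rowUnipotent (o : ι) (r : ι → F) : Matrix ι ι F :=
  1 + vecMulVec (Pi.single o 1) r

theorem rowUnipotent_apply (o : ι) (r : ι → F) (i j : ι) :
    rowUnipotent o r i j = (1 : Matrix ι ι F) i j + if i = o then r j else 0 := by
  rw [rowUnipotent, Matrix.add_apply, vecMulVec_apply]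
  by_cases h : i = o
  · subst h; simp
  · simp [h]

theorem rowUnipotent_single (o l : ι) (c : F) :
    rowUnipotent o (Pi.single l c) = transvection o l c := by
  ext i j
  rw [rowUnipotent_apply, transvection, Matrix.add_apply]
  by_cases hi : o = i
  · subst hi
    by_cases hj : l = j
    · subst hj; simp
    · simp [hj, Ne.symm hj]
  · simp [hi, Ne.symm hi]

variable [Fintype ι]

/-- `G` is a group of matrices of determinant one containing every monomial matrix of
determinant one. -/
structure IsMonomialOvergroup (G : Submonoid (Matrix ι ι F)) : Prop where
  det_eq_one : ∀ x ∈ G, x.det = 1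
  exists_inv : ∀ x ∈ G, ∃ y ∈ G, x * y = 1
  monomial_mem : ∀ (σ : Equiv.Perm ι) (d : ι → F),
    (monomialMatrix σ d).det = 1 → monomialMatrix σ d ∈ G

theorem ne_zero_of_det_monomialMatrix {σ : Equiv.Perm ι} {d : ι → F}
    (h : (monomialMatrix σ d).det = 1) (j : ι) : d j ≠ 0 := by
  intro h0
  rw [det_monomialMatrix, Finset.prod_eq_zero (Finset.mem_univ j) h0, mul_zero] at h
  exact zero_ne_one h

theorem monomialMatrix_mul_transvection {σ : Equiv.Perm ι} {d : ι → F} (hd : ∀ j, d j ≠ 0)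
    (i j : ι) (a : F) : monomialMatrix σ d * transvection i j a =
      transvection (σ i) (σ j) (d i * a / d j) * monomialMatrix σ d := by
  rw [transvection, transvection, mul_add, add_mul, mul_one, one_mul]
  congr 1
  ext k l
  rw [monomialMatrix_mul_apply, mul_monomialMatrix_apply]
  have h1 : i = σ⁻¹ k ↔ σ i = k := by rw [Equiv.Perm.eq_inv_iff_eq]
  by_cases hk : σ i = k
  · subst hk
    by_cases hl : j = l
    · subst hl
      simp [hd j]
    · simp [hl]
  · have : ¬ (i = σ⁻¹ k) := fun h => hk (h1.mp h)
    simp only [single_apply, hk, this, false_and, if_false]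
    simp

namespace IsMonomialOvergroup

variable {G : Submonoid (Matrix ι ι F)}

theorem inv_mem (hG : IsMonomialOvergroup G)
    {x y : Matrix ι ι F} (hx : x ∈ G) (hxy : x * y = 1) : y ∈ G := by
  obtain ⟨z, hz, hxz⟩ := hG.exists_inv x hx
  rwa [left_inv_eq_right_inv (mul_eq_one_comm.mp hxy) hxz]

theorem diagonal_mem (hG : IsMonomialOvergroup G)
    {d : ι → F} (hd : ∏ j, d j = 1) : diagonal d ∈ G := by
  rw [← monomialMatrix_one_eq_diagonal]
  exact hG.monomial_mem _ _ (by simp [det_monomialMatrix, hd])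

theorem transvection_conj_mem (hG : IsMonomialOvergroup G)
    {i j : ι} {a : F} (h : transvection i j a ∈ G) {σ : Equiv.Perm ι}
    {d : ι → F} (hdet : (monomialMatrix σ d).det = 1) :
    transvection (σ i) (σ j) (d i * a / d j) ∈ G := by
  have hd := ne_zero_of_det_monomialMatrix hdet
  have hm := hG.monomial_mem σ d hdet
  obtain ⟨m', hm', hmm⟩ := hG.exists_inv _ hm
  have : transvection (σ i) (σ j) (d i * a / d j) =
      monomialMatrix σ d * transvection i j a * m' := by
    rw [monomialMatrix_mul_transvection hd, mul_assoc, hmm, mul_one]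
  rw [this]
  exact G.mul_mem (G.mul_mem hm h) hm'

theorem transvection_mem_of_ne_zero (hG : IsMonomialOvergroup G)
    (h2 : (2 : F) ≠ 0) {i j : ι} (hij : i ≠ j) {a : F}
    (ha : a ≠ 0) (h : transvection i j a ∈ G) (b : F) : transvection i j b ∈ G := by
  have hneg : transvection i j (-a) ∈ G := hG.inv_mem h (by
    rw [transvection_mul_transvection_same _ _ hij, add_neg_cancel, transvection_zero])
  have hscale {c : F} (hc : transvection i j c ∈ G) (ε : F) : transvection i j (c * ε ^ 2) ∈ G := by
    by_cases hε : ε = 0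
    · subst hε; simp
    have hdet : (monomialMatrix (1 : Equiv.Perm ι)
        (Function.update (Function.update 1 i ε) j ε⁻¹)).det = 1 := by
      rw [det_monomialMatrix, Finset.prod_update_of_mem (Finset.mem_univ j),
        Finset.prod_update_of_mem (by simp [hij])]
      simp [hε]
    have := hG.transvection_conj_mem hc hdet
    simp only [Equiv.Perm.one_apply, Function.update_self, Function.update_of_ne hij] at this
    convert this using 1
    congr 1
    field_simp
  have key : b = a * ((b / a + 1) / 2) ^ 2 + (-a) * ((b / a - 1) / 2) ^ 2 := by
    field_simp; ring
  rw [key, ← transvection_mul_transvection_same _ _ hij]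
  exact G.mul_mem (hscale h _) (hscale hneg _)

theorem transvection_mem (hG : IsMonomialOvergroup G)
    (h2 : (2 : F) ≠ 0) (hT : HasTransvection G) {k l : ι} (hkl : k ≠ l)
    (b : F) : transvection k l b ∈ G := by
  obtain ⟨i, j, hij, a, ha, h⟩ := hT
  obtain ⟨σ, rfl, rfl⟩ := Equiv.Perm.exists_apply_pair_eq hij hkl
  have hdet : (monomialMatrix σ
      (Function.update 1 i ((Equiv.Perm.sign σ : ℤ) : F))).det = 1 := by
    rw [det_monomialMatrix, Finset.prod_update_of_mem (Finset.mem_univ i)]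
    rcases Int.units_eq_one_or (Equiv.Perm.sign σ) with h | h <;> simp [h]
  have hd := ne_zero_of_det_monomialMatrix hdet
  exact hG.transvection_mem_of_ne_zero h2 hkl
    (div_ne_zero (mul_ne_zero (hd i) ha) (hd j)) (hG.transvection_conj_mem h hdet) b

theorem mem_of_hasTransvection (hG : IsMonomialOvergroup G)
    [Nontrivial ι] (h2 : (2 : F) ≠ 0) (hT : HasTransvection G)
    {x : Matrix ι ι F} (hx : x.det = 1) : x ∈ G := by
  refine Matrix.SpecialLinearGroup.diagonal_transvection_induction'
    (P := fun M => (M : Matrix ι ι F) ∈ G) ⟨x, hx⟩ (fun i j hij c hc => ?_)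
    (fun i j hij a => hG.transvection_mem h2 hT hij a) (fun A B hA hB => G.mul_mem hA hB)
  have hdet := (Matrix.SpecialLinearGroup.diag2n hij c hc).2
  rw [Matrix.SpecialLinearGroup.diag2n_coe] at hdet ⊢
  exact hG.diagonal_mem (by rwa [det_diagonal] at hdet)

end IsMonomialOvergroup

theorem rowUnipotent_mul (o : ι) {r s : ι → F} (hr : r o = 0) :
    rowUnipotent o r * rowUnipotent o s = rowUnipotent o (r + s) := by
  simp only [rowUnipotent, mul_add, add_mul, mul_one, one_mul, vecMulVec_mul_vecMulVec,
    vecMulVec_add]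
  simp [hr, add_assoc]

theorem diagonal_mul_rowUnipotent (o : ι) (r d : ι → F) (hd : ∀ j, d j ≠ 0) :
    diagonal d * rowUnipotent o r =
      rowUnipotent o (fun l => d o * r l / d l) * diagonal d := by
  ext i j
  rw [diagonal_mul, mul_diagonal, rowUnipotent_apply, rowUnipotent_apply, mul_add, add_mul]
  congr 1
  · by_cases h : i = j
    · subst h; simp
    · simp [h]
  · by_cases h : i = o
    · subst h; simp [hd j]
    · simp [h]

namespace IsMonomialOvergroup

variable {G : Submonoid (Matrix ι ι F)}

theorem rowUnipotent_conj_mem (hG : IsMonomialOvergroup G)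
    {o : ι} {r d : ι → F} (h : rowUnipotent o r ∈ G)
    (hd : ∏ j, d j = 1) : rowUnipotent o (fun l => d o * r l / d l) ∈ G := by
  have hd0 (j : ι) : d j ≠ 0 := fun h0 => zero_ne_one (α := F)
    (by rw [← hd, Finset.prod_eq_zero (Finset.mem_univ j) h0])
  have hm := hG.diagonal_mem hd
  obtain ⟨m', hm', hmm⟩ := hG.exists_inv _ hm
  have : rowUnipotent o (fun l => d o * r l / d l) =
      diagonal d * rowUnipotent o r * m' := by
    rw [diagonal_mul_rowUnipotent o r d hd0, mul_assoc, hmm, mul_one]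
  rw [this]
  exact G.mul_mem (G.mul_mem hm h) hm'

theorem rowUnipotent_neg_mem (hG : IsMonomialOvergroup G)
    {o : ι} {r : ι → F} (hr : r o = 0) (h : rowUnipotent o r ∈ G) :
    rowUnipotent o (-r) ∈ G :=
  hG.inv_mem h (by rw [rowUnipotent_mul o hr, add_neg_cancel]; simp [rowUnipotent])

/-- Conjugating by a diagonal matrix rescales two coordinates in opposite ways. -/
theorem rowUnipotent_rescale_mem (hG : IsMonomialOvergroup G)
    {o l k : ι} (hol : l ≠ o) (hok : k ≠ o) (hlk : l ≠ k)
    {r : ι → F} (h : rowUnipotent o r ∈ G) {ε : F} (hε : ε ≠ 0) :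
    rowUnipotent o (fun j => if j = k then ε * r j else if j = l then ε⁻¹ * r j else r j) ∈ G := by
  have hd : ∏ j, Function.update (Function.update (1 : ι → F) l ε) k ε⁻¹ j = 1 := by
    rw [Finset.prod_update_of_mem (Finset.mem_univ k),
        Finset.prod_update_of_mem (by simp [hlk])]
    simp [hε]
  convert hG.rowUnipotent_conj_mem h hd using 2
  ext j
  rw [Function.update_of_ne hok.symm, Function.update_of_ne hol.symm]
  by_cases hk : j = k
  · subst hk; simp [mul_comm]
  by_cases hl : j = l
  · subst hl; simp [hk, div_eq_inv_mul]
  · simp [hk, hl]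

theorem hasTransvection_of_rowUnipotent (hG : IsMonomialOvergroup G)
    [Fintype F] (h2 : (2 : F) ≠ 0) (hF : 5 ≤ Fintype.card F)
    (hι : 3 ≤ Fintype.card ι) {o : ι} {r : ι → F} (hr : r o = 0) (hr0 : r ≠ 0)
    (h : rowUnipotent o r ∈ G) : HasTransvection G := by
  obtain ⟨l, hl⟩ := Function.ne_iff.mp hr0
  rw [Pi.zero_apply] at hl
  have hol : l ≠ o := by rintro rfl; exact hl hr
  obtain ⟨k, hk⟩ : ∃ k, k ∉ ({o, l} : Finset ι) := by
    by_contra! h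
    have := Finset.card_le_card (fun a _ => h a : (Finset.univ : Finset ι) ⊆ {o, l})
    have h' := Finset.card_le_two (a := o) (b := l)
    rw [Finset.card_univ] at this
    omega
  simp only [Finset.mem_insert, Finset.mem_singleton, not_or] at hk
  obtain ⟨hok, hkl⟩ := hk
  obtain ⟨ρ, hρ, hρl, hρo⟩ : ∃ ρ : ι → F, rowUnipotent o ρ ∈ G ∧ ρ l ≠ 0 ∧
      ∀ j, j ≠ k → j ≠ l → ρ j = 0 := by
    have h1 := hG.rowUnipotent_rescale_mem hol hok (Ne.symm hkl) h (neg_ne_zero.mpr one_ne_zero)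
    have h3 := G.mul_mem h1 (hG.rowUnipotent_neg_mem hr h)
    rw [rowUnipotent_mul o (by simp [Ne.symm hok, hol.symm, hr])] at h3
    refine ⟨_, h3, ?_, ?_⟩
    · simp only [Pi.add_apply, Pi.neg_apply, Ne.symm hkl, if_false, if_true, inv_neg, inv_one]
      intro h0
      exact mul_ne_zero h2 hl (by linear_combination -h0)
    · intro j hj hj'
      simp [hj, hj']
  have hρ0 : ρ o = 0 := hρo o (Ne.symm hok) hol.symm
  obtain ⟨x, hx0, hx1, hx2⟩ : ∃ x : F, x ≠ 0 ∧ 1 + x ≠ 0 ∧ x ^ 2 + x + 1 ≠ 0 := by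
    open Polynomial in
    obtain ⟨ε, hε⟩ := exists_eval_ne_zero_of_natDegree_lt_card
      (X * (1 + X) * (X ^ 2 + X + 1) : F[X]) (by
        refine mul_ne_zero (mul_ne_zero X_ne_zero ?_) ?_
        · intro h; simpa using congrArg (eval 0) h
        · intro h; simpa using congrArg (eval 0) h) (by
        refine lt_of_le_of_lt ?_ hF
        compute_degree)
    simp only [eval_mul, mul_ne_zero_iff] at hε
    exact ⟨ε, by simpa using hε.1.1, by simpa using hε.1.2, by simpa using hε.2⟩
  have hxm := hG.rowUnipotent_rescale_mem hol hok (Ne.symm hkl) hρ hx0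
  have hx1m := hG.rowUnipotent_neg_mem (by simp [Ne.symm hok, hol.symm, hρ0])
    (hG.rowUnipotent_rescale_mem hol hok (Ne.symm hkl) hρ hx1)
  have hall := G.mul_mem (G.mul_mem hρ hxm) hx1m
  rw [rowUnipotent_mul o hρ0,
    rowUnipotent_mul o (by simp [Ne.symm hok, hol.symm, hρ0])] at hall
  refine ⟨o, l, hol.symm, (1 + x⁻¹ - (1 + x)⁻¹) * ρ l, mul_ne_zero ?_ hρl, ?_⟩
  · have : 1 + x⁻¹ - (1 + x)⁻¹ = (x ^ 2 + x + 1) / (x * (1 + x)) := by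
      field_simp; ring
    rw [this]
    exact div_ne_zero hx2 (mul_ne_zero hx0 hx1)
  · rw [← rowUnipotent_single]
    convert hall using 2
    ext j
    by_cases hjk : j = k
    · subst hjk
      simp [hkl]; ring
    by_cases hjl : j = l
    · subst hjl
      simp [hjk]; ring
    · simp [hjk, hjl, hρo j hjk hjl]

end IsMonomialOvergroup

end SpecialLinear

section LineStabilizer

/-- The submatrix on the coordinates different from `o`. -/
abbrev complBlock {ι F : Type*} (o : ι) (x : Matrix ι ι F) : Matrix {j // j ≠ o} {j // j ≠ o} F :=
  x.submatrix Subtype.val Subtype.val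

theorem complBlock_apply {ι F : Type*} (o : ι) (x : Matrix ι ι F) (i j : {j // j ≠ o}) :
    complBlock o x i j = x i j := rfl

variable {ι F : Type*} [DecidableEq ι] [Fintype ι] [Field F]

theorem det_of_column_eq_single {x : Matrix ι ι F} {o : ι} (hx : ∀ k, k ≠ o → x k o = 0) :
    x.det = x o o * (complBlock o x).det := by
  rw [twoBlockTriangular_det x (· = o) (by rintro i hi j rfl; exact hx i hi)]
  congr 1
  convert det_eq_elem_of_subsingleton (x.toSquareBlockProp (· = o)) (⟨o, rfl⟩ : {j // j = o})
  rfl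

theorem submatrix_mul_of_column_eq_single {x : Matrix ι ι F} {o : ι}
    (hx : ∀ k, k ≠ o → x k o = 0) (y : Matrix ι ι F) :
    complBlock o (x * y) = complBlock o x * complBlock o y := by
  ext k l
  simp only [submatrix_apply, mul_apply]
  rw [Fintype.sum_eq_add_sum_subtype_ne _ o, hx k k.2, zero_mul, zero_add]

theorem mul_column_eq_zero {x y : Matrix ι ι F} {o : ι}
    (hx : ∀ k, k ≠ o → x k o = 0) (hy : ∀ k, k ≠ o → y k o = 0) (k : ι) (hk : k ≠ o) :
    (x * y) k o = 0 := by
  rw [mul_apply, Fintype.sum_eq_add_sum_subtype_ne _ o, hx k hk, zero_mul, zero_add]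
  exact Finset.sum_eq_zero fun m _ => by rw [hy m m.2, mul_zero]

theorem inv_column_eq_zero {x y : Matrix ι ι F} {o : ι} (hxy : x * y = 1)
    (hx : ∀ k, k ≠ o → x k o = 0) (k : ι) (hk : k ≠ o) : y k o = 0 := by
  have hyx : y * x = 1 := mul_eq_one_comm.mp hxy
  have h1 (k : ι) : y k o * x o o = (1 : Matrix ι ι F) k o := by
    rw [← hyx, mul_apply, Fintype.sum_eq_add_sum_subtype_ne _ o, left_eq_add]
    exact Finset.sum_eq_zero fun m _ => by rw [hx m m.2, mul_zero]
  have h0 : x o o ≠ 0 := fun h0 => by simpa [h0] using h1 o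
  have := h1 k
  rw [one_apply_ne hk] at this
  exact (mul_eq_zero.mp this).resolve_right h0

/-- The matrices induced on the coordinates different from `o` by the elements of `G`
preserving the line spanned by the basis vector at `o`. -/
def lineBlocks (G : Submonoid (Matrix ι ι F)) (o : ι) :
    Submonoid (Matrix {j // j ≠ o} {j // j ≠ o} F) where
  carrier := {A | ∃ x ∈ G, (∀ k, k ≠ o → x k o = 0) ∧ complBlock o x = A}
  one_mem' := ⟨1, G.one_mem, fun k hk => one_apply_ne hk, submatrix_one _ Subtype.val_injective⟩
  mul_mem' := by
    rintro _ _ ⟨x, hx, hxo, rfl⟩ ⟨y, hy, hyo, rfl⟩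
    exact ⟨x * y, G.mul_mem hx hy, mul_column_eq_zero hxo hyo,
      submatrix_mul_of_column_eq_single hxo y⟩

theorem eq_rowUnipotent_of_submatrix_eq_one {x : Matrix ι ι F} {o : ι}
    (hx : ∀ k, k ≠ o → x k o = 0) (hdet : x.det = 1)
    (h : complBlock o x = 1) :
    x = rowUnipotent o (Function.update (x o) o 0) := by
  rw [det_of_column_eq_single hx, h, det_one, mul_one] at hdet
  ext i j
  rw [rowUnipotent_apply]
  by_cases hi : i = o
  · subst hi
    by_cases hj : j = i
    · subst hj; simp [hdet]
    · simp [hj, Ne.symm hj]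
  · by_cases hj : j = o
    · subst hj; simp [hi, hx i hi]
    · have := congrFun (congrFun h ⟨i, hi⟩) ⟨j, hj⟩
      rw [complBlock_apply] at this
      simp only [hi, if_false, add_zero]
      rw [this]
      simp [one_apply]

/-- Extension of a monomial matrix on the coordinates different from `o` to a monomial matrix of
determinant one. -/
theorem exists_monomialMatrix_extension (o : ι) (σ : Equiv.Perm {j // j ≠ o})
    (d : {j // j ≠ o} → F) (hd : ∀ j, d j ≠ 0) :
    ∃ (τ : Equiv.Perm ι) (e : ι → F), (monomialMatrix τ e).det = 1 ∧
      (∀ k, k ≠ o → monomialMatrix τ e k o = 0) ∧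
      complBlock o (monomialMatrix τ e) = monomialMatrix σ d := by
  have hτ : Equiv.Perm.ofSubtype σ o = o :=
    Equiv.Perm.ofSubtype_apply_of_not_mem σ (by simp)
  have hdet : (monomialMatrix σ d).det ≠ 0 := by
    rw [det_monomialMatrix]
    refine mul_ne_zero ?_ (Finset.prod_ne_zero_iff.mpr fun j _ => hd j)
    rcases Int.units_eq_one_or (Equiv.Perm.sign σ) with h | h <;> simp [h]
  set e : ι → F := fun j => if h : j ≠ o then d ⟨j, h⟩ else (monomialMatrix σ d).det⁻¹ with he
  have hcol : ∀ k, k ≠ o → monomialMatrix (Equiv.Perm.ofSubtype σ) e k o = 0 := by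
    intro k hk
    rw [monomialMatrix_apply, hτ, if_neg hk]
  have hsub : complBlock o (monomialMatrix (Equiv.Perm.ofSubtype σ) e) =
      monomialMatrix σ d := by
    ext k l
    rw [complBlock_apply, monomialMatrix_apply, monomialMatrix_apply,
      Equiv.Perm.ofSubtype_apply_coe]
    simp [he, l.2, Subtype.ext_iff]
  refine ⟨_, e, ?_, hcol, hsub⟩
  rw [det_of_column_eq_single hcol, hsub, monomialMatrix_apply, hτ]
  simp [he, hdet]

theorem prod_ite_inv_pow (o : ι) {b : F} (hb : b ≠ 0) :
    ∏ j, (if j = o then (b ^ (Fintype.card ι - 1))⁻¹ else b) = 1 := by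
  have hcard : Fintype.card {j // j ≠ o} = Fintype.card ι - 1 := by
    rw [Fintype.card_subtype_compl, Fintype.card_subtype_eq]
  rw [Fintype.prod_eq_mul_prod_subtype_ne _ o,
    Finset.prod_congr rfl fun (j : {j // j ≠ o}) _ => if_neg j.2, Finset.prod_const,
    Finset.card_univ, hcard, if_pos rfl, inv_mul_cancel₀ (pow_ne_zero _ hb)]

open Polynomial in
theorem exists_diagonal_separating [Fintype F] (hι : 3 ≤ Fintype.card ι)
    (hF : 7 ≤ Fintype.card F ∨ Fintype.card F = 5 ∧ 4 ≤ Fintype.card ι)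
    {o p q l : ι} (hp : p ≠ o) (hq : q ≠ o) (hl : l ≠ o) :
    ∃ h : ι → F, ∏ j, h j = 1 ∧ h p = h q ∧ h o ≠ h l := by
  rcases hι.eq_or_lt with hι | hι
  · obtain ⟨b, hb⟩ := exists_eval_ne_zero_of_natDegree_lt_card
      (X * (X ^ 3 - 1) : F[X]) (by
        refine mul_ne_zero X_ne_zero fun h => ?_
        simpa using congrArg (eval 0) h) (by
        refine lt_of_le_of_lt (b := 4) ?_ (by omega)
        compute_degree)
    simp only [eval_mul, mul_ne_zero_iff, eval_X, eval_sub, eval_pow, eval_one] at hb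
    obtain ⟨hb0, hb3⟩ := hb
    refine ⟨fun j => if j = o then (b ^ 2)⁻¹ else b, ?_, by simp [hp, hq], ?_⟩
    · simpa [← hι] using prod_ite_inv_pow o hb0
    · simp only [if_true, hl, if_false]
      intro h
      apply hb3
      field_simp at h
      linear_combination -h
  · obtain ⟨b, hb⟩ := exists_eval_ne_zero_of_natDegree_lt_card
      (X * (X ^ 2 - 1) : F[X]) (by
        refine mul_ne_zero X_ne_zero fun h => ?_
        simpa using congrArg (eval 0) h) (by
        refine lt_of_le_of_lt (b := 3) ?_ (by omega)
        compute_degree)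
    simp only [eval_mul, mul_ne_zero_iff, eval_X, eval_sub, eval_pow, eval_one] at hb
    obtain ⟨hb0, hb2⟩ := hb
    obtain ⟨t, ht⟩ : ∃ t, t ∉ ({o, p, q} : Finset ι) := by
      by_contra! h
      have := Finset.card_le_card (fun a _ => h a : (Finset.univ : Finset ι) ⊆ {o, p, q})
      have h' := Finset.card_le_three (a := o) (b := p) (c := q)
      rw [Finset.card_univ] at this
      omega
    simp only [Finset.mem_insert, Finset.mem_singleton, not_or] at ht
    obtain ⟨hto, htp, htq⟩ := ht
    refine ⟨Function.update (Function.update 1 o b) t b⁻¹, ?_, ?_, ?_⟩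
    · rw [Finset.prod_update_of_mem (Finset.mem_univ t),
        Finset.prod_update_of_mem (by simp [Ne.symm hto])]
      simp [hb0]
    · simp [Ne.symm htp, Ne.symm htq, hp, hq]
    · rw [Function.update_of_ne (Ne.symm hto), Function.update_self]
      intro h
      apply hb2
      by_cases hlt : l = t
      · subst hlt
        rw [Function.update_self] at h
        field_simp at h
        linear_combination h
      · rw [Function.update_of_ne hlt, Function.update_of_ne hl, Pi.one_apply] at h
        rw [h]; ring

namespace IsMonomialOvergroup

variable {G : Submonoid (Matrix ι ι F)}

theorem containsMonomials_lineBlocks (hG : IsMonomialOvergroup G)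
    (o : ι) : ContainsMonomials (lineBlocks G o) := by
  intro σ d hd
  obtain ⟨τ, e, hdet, hcol, hsub⟩ := exists_monomialMatrix_extension o σ d hd
  exact ⟨_, hG.monomial_mem τ e hdet, hcol, hsub⟩

theorem exists_rowUnipotent_of_isMonomialMatrix_block (hG : IsMonomialOvergroup G)
    {o : ι} {x : Matrix ι ι F} (hx : x ∈ G)
    (hxo : ∀ k, k ≠ o → x k o = 0) (hxm : ¬ IsMonomialMatrix x)
    (hblock : IsMonomialMatrix (complBlock o x)) :
    ∃ r : ι → F, r o = 0 ∧ r ≠ 0 ∧ rowUnipotent o r ∈ G := by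
  obtain ⟨σ, d, hd, hσ⟩ := hblock
  obtain ⟨τ, e, hdet, hcol, hsub⟩ := exists_monomialMatrix_extension o σ⁻¹
    (fun i => (d (σ⁻¹ i))⁻¹) (fun i => inv_ne_zero (hd (σ⁻¹ i)))
  have hm := hG.monomial_mem τ e hdet
  have hmem := G.mul_mem hx hm
  have heq := eq_rowUnipotent_of_submatrix_eq_one (mul_column_eq_zero hxo hcol)
    (hG.det_eq_one _ hmem) (by
      rw [submatrix_mul_of_column_eq_single hxo, hsub, hσ, monomialMatrix_mul_inv σ hd])
  refine ⟨_, ?_, fun h0 => hxm ?_, heq ▸ hmem⟩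
  · simp
  · rw [h0] at heq
    have h1 : x * monomialMatrix τ e = 1 := by rw [heq]; simp [rowUnipotent]
    exact IsMonomialMatrix.of_mul_eq_one ⟨τ, e, ne_zero_of_det_monomialMatrix hdet, rfl⟩
      (mul_eq_one_comm.mp h1)

theorem hasTransvection_of_transvection_mem_lineBlocks (hG : IsMonomialOvergroup G)
    [Fintype F] (h2 : (2 : F) ≠ 0)
    (hι : 3 ≤ Fintype.card ι) (hF : 7 ≤ Fintype.card F ∨ Fintype.card F = 5 ∧ 4 ≤ Fintype.card ι)
    {o : ι} {p q : {j // j ≠ o}} (hpq : p ≠ q) {a : F} (ha : a ≠ 0)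
    (h : transvection p q a ∈ lineBlocks G o) : HasTransvection G := by
  obtain ⟨y, hy, hyo, hyb⟩ := h
  have hpq' : (p : ι) ≠ q := fun h => hpq (Subtype.ext h)
  have hto (b : F) (k : ι) (hk : k ≠ o) : transvection (p : ι) q b k o = 0 := by
    simp [transvection, hk, q.2]
  have htb (b : F) : complBlock o (transvection (p : ι) q b) = transvection p q b := by
    ext k l
    simp [transvection, single_apply, one_apply, Subtype.ext_iff]
  have hz : y * transvection (p : ι) q (-a) =
      rowUnipotent o (Function.update ((y * transvection (p : ι) q (-a)) o) o 0) := by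
    refine eq_rowUnipotent_of_submatrix_eq_one (mul_column_eq_zero hyo (hto _)) ?_ ?_
    · rw [det_mul, hG.det_eq_one y hy, det_transvection_of_ne _ _ hpq', one_mul]
    · rw [submatrix_mul_of_column_eq_single hyo, htb, hyb,
        transvection_mul_transvection_same _ _ hpq, add_neg_cancel, transvection_zero]
  set s := Function.update ((y * transvection (p : ι) q (-a)) o) o 0 with hs
  have hso : s o = 0 := by simp [hs]
  have hyeq : y = rowUnipotent o s * transvection (p : ι) q a := by
    rw [← hz, mul_assoc, transvection_mul_transvection_same _ _ hpq', neg_add_cancel,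
      transvection_zero, mul_one]
  by_cases hs0 : s = 0
  · refine ⟨p, q, hpq', a, ha, ?_⟩
    rw [hs0] at hyeq
    rw [hyeq] at hy
    simpa [rowUnipotent] using hy
  obtain ⟨l, hl⟩ := Function.ne_iff.mp hs0
  rw [Pi.zero_apply] at hl
  have hlo : l ≠ o := by rintro rfl; exact hl hso
  have hF5 : 5 ≤ Fintype.card F := by omega
  obtain ⟨h, hh, hhpq, hhl⟩ : ∃ h : ι → F, ∏ j, h j = 1 ∧ h p = h q ∧ h o ≠ h l :=
    exists_diagonal_separating hι hF p.2 q.2 hlo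
  have hh0 (j : ι) : h j ≠ 0 := fun h0 => zero_ne_one (α := F)
    (by rw [← hh, Finset.prod_eq_zero (Finset.mem_univ j) h0])
  have hyinv : y * (transvection (p : ι) q (-a) * rowUnipotent o (-s)) = 1 := by
    rw [← mul_assoc, hz, rowUnipotent_mul o hso, add_neg_cancel]
    simp [rowUnipotent]
  have hhy : diagonal h * y = rowUnipotent o (fun l => h o * s l / h l) *
      transvection (p : ι) q a * diagonal h := by
    have hcomm : diagonal h * transvection (p : ι) q a = transvection (p : ι) q a * diagonal h := by
      have := monomialMatrix_mul_transvection (σ := 1) hh0 p q a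
      rw [monomialMatrix_one_eq_diagonal, hhpq, mul_div_cancel_left₀ _ (hh0 _)] at this
      exact this
    rw [hyeq, ← mul_assoc, diagonal_mul_rowUnipotent o s h hh0, mul_assoc, hcomm, mul_assoc]
  obtain ⟨h', hh', hhh⟩ := hG.exists_inv _ (hG.diagonal_mem hh)
  have hmem := G.mul_mem (G.mul_mem (G.mul_mem (hG.diagonal_mem hh) hy) hh') (hG.inv_mem hy hyinv)
  rw [hhy, mul_assoc _ (diagonal h), hhh, mul_one, ← mul_assoc, mul_assoc (rowUnipotent _ _),
    transvection_mul_transvection_same _ _ hpq', add_neg_cancel, transvection_zero, mul_one,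
    rowUnipotent_mul o (by simp [hso])] at hmem
  refine hG.hasTransvection_of_rowUnipotent h2 hF5 hι ?_ ?_ hmem
  · simp [hso]
  · intro h0
    have := congrFun h0 l
    simp only [Pi.add_apply, Pi.neg_apply, Pi.zero_apply] at this
    have h3 := hh0 l
    field_simp at this
    have h4 : (h o - h l) * s l = 0 := by linear_combination this
    exact (mul_ne_zero (sub_ne_zero.mpr hhl) hl) h4

/-- If an element of `G` outside the monomial group has a column with a single nonzero entry,
then `G` contains a transvection. -/
theorem hasTransvection_of_column (hG : IsMonomialOvergroup G) [Fintype F] (h2 : (2 : F) ≠ 0)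
    (hF : Fintype.card ι = 2 ∨ 3 ≤ Fintype.card ι ∧
      (7 ≤ Fintype.card F ∨ Fintype.card F = 5 ∧ 4 ≤ Fintype.card ι))
    {x : Matrix ι ι F} (hx : x ∈ G) (hxm : ¬ IsMonomialMatrix x) {i o : ι}
    (hcol : ∀ k, k ≠ i → x k o = 0) : HasTransvection G := by
  wlog hio : i = o generalizing x i
  · have hdet : (monomialMatrix (Equiv.swap i o) (Function.update (1 : ι → F) i (-1))).det = 1 := by
      rw [det_monomialMatrix, Finset.prod_update_of_mem (Finset.mem_univ i),
        Equiv.Perm.sign_swap hio]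
      simp
    have hm := hG.monomial_mem _ _ hdet
    refine this (G.mul_mem hm hx) (fun h => hxm ?_) (i := o) (fun k hk => ?_) rfl
    · obtain ⟨m', hm', hmm⟩ := hG.exists_inv _ hm
      have hmono : IsMonomialMatrix
          (monomialMatrix (Equiv.swap i o) (Function.update (1 : ι → F) i (-1))) :=
        ⟨_, _, ne_zero_of_det_monomialMatrix hdet, rfl⟩
      have := (hmono.of_mul_eq_one hmm).mul h
      rwa [← mul_assoc, mul_eq_one_comm.mp hmm, one_mul] at this
    · rw [monomialMatrix_mul_apply, hcol, mul_zero]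
      intro h
      rw [Equiv.Perm.inv_eq_iff_eq, Equiv.swap_apply_left] at h
      exact hk h
  subst hio
  by_cases hblock : IsMonomialMatrix (complBlock i x)
  · obtain ⟨r, hr, hr0, hmem⟩ := hG.exists_rowUnipotent_of_isMonomialMatrix_block hx hcol hxm hblock
    rcases hF with hι | ⟨hι, hF⟩
    · obtain ⟨l, hl⟩ := Function.ne_iff.mp hr0
      rw [Pi.zero_apply] at hl
      have hli : l ≠ i := by rintro rfl; exact hl hr
      refine ⟨i, l, hli.symm, r l, hl, ?_⟩
      rw [← rowUnipotent_single]
      convert hmem using 2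
      ext j
      by_cases hjl : j = l
      · subst hjl; simp
      · by_cases hji : j = i
        · subst hji; simp [hjl, hr]
        · have h3 : Finset.card {j, i, l} = 3 := Finset.card_eq_three.mpr
            ⟨j, i, l, hji, hjl, hli.symm, rfl⟩
          have := Finset.card_le_univ ({j, i, l} : Finset ι)
          omega
    · exact hG.hasTransvection_of_rowUnipotent h2 (by omega) hι hr hr0 hmem
  · obtain ⟨y, hy, hxy⟩ := hG.exists_inv x hx
    have hinv : complBlock i x * complBlock i y = 1 := by
      rw [← submatrix_mul_of_column_eq_single hcol, hxy]
      exact submatrix_one _ Subtype.val_injective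
    have hcard : Fintype.card {j // j ≠ i} = Fintype.card ι - 1 := by
      rw [Fintype.card_subtype_compl, Fintype.card_subtype_eq]
    rcases hF with hι | ⟨hι, hF⟩
    · refine (hblock (isMonomialMatrix_of_column hinv fun j => ⟨j, fun k hk => (hk ?_).elim⟩)).elim
      have : Subsingleton {j // j ≠ i} := by
        rw [← Fintype.card_le_one_iff_subsingleton]; omega
      exact Subsingleton.elim _ _
    · obtain ⟨p, q, hpq, a, ha, hmem⟩ := hasTransvection_of_not_isMonomialMatrix
        (hG.containsMonomials_lineBlocks i) h2 (by omega) ⟨x, hx, hcol, rfl⟩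
        ⟨y, hy, inv_column_eq_zero hxy hcol, rfl⟩ hinv hblock
      exact hG.hasTransvection_of_transvection_mem_lineBlocks h2 hι hF hpq ha hmem

end IsMonomialOvergroup

end LineStabilizer

section ColumnWeights

variable {ι F : Type*} [DecidableEq ι] [Fintype ι] [Field F]

/-- Every element of `G` having a column with at most one nonzero entry is monomial. -/
def MonomialOfColumn (G : Submonoid (Matrix ι ι F)) : Prop :=
  ∀ x ∈ G, ∀ i o, (∀ k, k ≠ i → x k o = 0) → IsMonomialMatrix x

theorem MonomialOfColumn.conj_isMonomialMatrix {G : Submonoid (Matrix ι ι F)}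
    (hcol : MonomialOfColumn G) {x y a : Matrix ι ι F} (hx : x ∈ G) (hy : y ∈ G)
    (ha : a ∈ G) (hxy : x * y = 1) {o : ι} {c : F} (h : ∀ k, (a * x) k o = c * x k o) :
    IsMonomialMatrix (y * a * x) ∧ ∀ k, (y * a * x) k o = c * (1 : Matrix ι ι F) k o := by
  have hent (k : ι) : (y * a * x) k o = c * (1 : Matrix ι ι F) k o := by
    rw [mul_assoc, mul_apply, ← mul_eq_one_comm.mp hxy, mul_apply, Finset.mul_sum]
    refine Finset.sum_congr rfl fun m _ => ?_
    rw [h m]; ring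
  refine ⟨hcol _ (G.mul_mem (G.mul_mem hy ha) hx) o o fun k hk => ?_, hent⟩
  rw [hent, one_apply_ne hk, mul_zero]

namespace IsMonomialOvergroup

variable {G : Submonoid (Matrix ι ι F)}

theorem row_eigenvector_of_column (hG : IsMonomialOvergroup G) (hcol : MonomialOfColumn G)
    {x y : Matrix ι ι F} (hx : x ∈ G) (hy : y ∈ G)
    (hxy : x * y = 1) {o : ι} {σ : Equiv.Perm ι} {d : ι → F} {c : F}
    (hdet : (monomialMatrix σ d).det = 1) (h : ∀ k, d k * x k o = c * x (σ k) o) (l : ι) :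
    y o (σ l) * d l = c * y o l := by
  have hyx : y * x = 1 := mul_eq_one_comm.mp hxy
  obtain ⟨⟨τ, e, he, heq⟩, hent⟩ := hcol.conj_isMonomialMatrix hx hy
    (hG.monomial_mem σ d hdet) hxy (o := o) (c := c) (fun k => by
      rw [monomialMatrix_mul_apply, h]; simp)
  have hτ : τ o = o := by
    by_contra hne
    have := hent (τ o)
    rw [heq, monomialMatrix_apply, if_pos rfl, one_apply_ne hne, mul_zero] at this
    exact he o this
  have hrow (m : ι) : (y * monomialMatrix σ d * x) o m = c * (1 : Matrix ι ι F) o m := by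
    by_cases hm : o = m
    · subst hm; exact hent o
    · rw [heq, monomialMatrix_apply, if_neg, one_apply_ne hm, mul_zero]
      intro h
      exact hm (τ.injective (hτ.trans h))
  rw [← mul_monomialMatrix_apply]
  have : y * monomialMatrix σ d = (y * monomialMatrix σ d * x) * y := by
    rw [mul_assoc _ x y, hxy, mul_one]
  rw [this, mul_apply]
  simp only [hrow]
  simp [one_apply]

open Classical in
theorem column_symmetry (hG : IsMonomialOvergroup G) (hcol : MonomialOfColumn G)
    {x y : Matrix ι ι F} (hx : x ∈ G) (hy : y ∈ G) (hxy : x * y = 1) {o : ι}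
    {σ : Equiv.Perm ι} {s : ι → F} {c : F} (hs : ∀ k, x k o ≠ 0 → s k = c)
    (hσ : ∀ k, x (σ k) o = 0 ↔ x k o = 0) (hdet : ((Equiv.Perm.sign σ : ℤ) : F) * ∏ k, s k = 1)
    (l : ι) : y o (σ l) * (s l * if x (σ l) o = 0 then 1 else x (σ l) o) =
      c * (y o l * if x l o = 0 then 1 else x l o) := by
  set u : ι → F := fun k => if x k o = 0 then 1 else x k o with hu
  have hu0 (k : ι) : u k ≠ 0 := by
    simp only [hu]; split_ifs with h
    exacts [one_ne_zero, h]
  have key := hG.row_eigenvector_of_column hcol hx hy hxy (o := o) (σ := σ)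
    (d := fun k => s k * (u (σ k) / u k)) (c := c) ?_ ?_ l
  · change y o (σ l) * (s l * u (σ l)) = c * (y o l * u l)
    have := hu0 l
    field_simp at key
    linear_combination key
  · rw [det_monomialMatrix, Finset.prod_mul_distrib, Finset.prod_div_distrib,
      Equiv.prod_comp σ u, div_self (Finset.prod_ne_zero_iff.mpr fun k _ => hu0 k), mul_one, hdet]
  · intro k
    by_cases hk : x k o = 0
    · rw [hk, (hσ k).mpr hk]; simp
    · have hk' : x (σ k) o ≠ 0 := fun h => hk ((hσ k).mp h)
      simp only [hs k hk, hu, hk, hk', if_false]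
      field_simp

theorem mul_entry_eq_of_column (hG : IsMonomialOvergroup G) (hcol : MonomialOfColumn G)
    {x y : Matrix ι ι F} (hx : x ∈ G) (hy : y ∈ G)
    (hxy : x * y = 1) (hι : 3 ≤ Fintype.card ι ∨ Fintype.card ι = 2 ∧ ∃ z : F, z ^ 2 = -1)
    {i j o : ι} (hi : x i o ≠ 0) (hj : x j o ≠ 0) : x j o * y o j = x i o * y o i := by
  rcases eq_or_ne i j with rfl | hij
  · rfl
  have hsupp {k : ι} : x (Equiv.swap i j k) o = 0 ↔ x k o = 0 := by
    by_cases h1 : k = i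
    · subst h1; simp [hi, hj]
    by_cases h2 : k = j
    · subst h2; simp [hi, hj]
    rw [Equiv.swap_apply_of_ne_of_ne h1 h2]
  rcases hι with hι | ⟨hι, z, hz⟩
  · obtain ⟨l, hl⟩ : ∃ l, l ∉ ({i, j} : Finset ι) := by
      by_contra! h
      have := Finset.card_le_card (fun a _ => h a : (Finset.univ : Finset ι) ⊆ {i, j})
      have h' := Finset.card_le_two (a := i) (b := j)
      rw [Finset.card_univ] at this
      omega
    simp only [Finset.mem_insert, Finset.mem_singleton, not_or] at hl
    obtain ⟨hli, hlj⟩ := hl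
    by_cases hlo : x l o = 0
    · have key := hG.column_symmetry hcol hx hy hxy (o := o) (σ := Equiv.swap i j)
        (s := Function.update 1 l (-1)) (c := 1)
        (fun k hk => by rw [Function.update_of_ne (by rintro rfl; exact hk hlo), Pi.one_apply])
        (fun k => hsupp) (by
          rw [Finset.prod_update_of_mem (Finset.mem_univ l), Equiv.Perm.sign_swap hij]; simp) i
      simp only [Equiv.swap_apply_left, hi, hj, if_false, Function.update_of_ne (Ne.symm hli),
        Pi.one_apply, one_mul] at key
      linear_combination key
    · have hσi : (Equiv.swap i j * Equiv.swap j l) i = j := by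
        rw [Equiv.Perm.mul_apply, Equiv.swap_apply_of_ne_of_ne hij (Ne.symm hli),
          Equiv.swap_apply_left]
      have key := hG.column_symmetry hcol hx hy hxy (o := o) (σ := Equiv.swap i j * Equiv.swap j l)
        (s := 1) (c := 1) (fun k hk => rfl) (fun k => by
          rw [Equiv.Perm.mul_apply, hsupp]
          by_cases h1 : k = j
          · subst h1; simp [hlo, hj]
          by_cases h2 : k = l
          · subst h2; simp [hlo, hj]
          rw [Equiv.swap_apply_of_ne_of_ne h1 h2]) (by
          rw [Equiv.Perm.sign_mul, Equiv.Perm.sign_swap hij, Equiv.Perm.sign_swap (Ne.symm hlj)]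
          simp) i
      rw [hσi] at key
      simp only [hi, hj, if_false, Pi.one_apply, one_mul] at key
      linear_combination key
  · have key := hG.column_symmetry hcol hx hy hxy (o := o) (σ := Equiv.swap i j)
        (s := fun _ => z) (c := z) (fun k hk => rfl) (fun k => hsupp) (by
          rw [Finset.prod_const, Finset.card_univ, hι, hz, Equiv.Perm.sign_swap hij]; simp) i
    have hz0 : z ≠ 0 := by rintro rfl; simp at hz
    simp only [Equiv.swap_apply_left, hi, hj, if_false] at key
    exact mul_left_cancel₀ hz0 (by linear_combination key)

open Classical in
/-- The entries of a column and of the corresponding row of the inverse are determined by the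
number of nonzero entries in the column. -/
theorem card_mul_entry_eq_one (hG : IsMonomialOvergroup G) (hcol : MonomialOfColumn G)
    {x y : Matrix ι ι F} (hx : x ∈ G) (hy : y ∈ G)
    (hxy : x * y = 1) (hι : 3 ≤ Fintype.card ι ∨ Fintype.card ι = 2 ∧ ∃ z : F, z ^ 2 = -1)
    {i o : ι} (hi : x i o ≠ 0) :
    ((Finset.univ.filter fun k => x k o ≠ 0).card : F) * (x i o * y o i) = 1 := by
  have hsum : ∑ k, y o k * x k o = 1 := by
    rw [← mul_apply, mul_eq_one_comm.mp hxy, one_apply_eq]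
  rw [← Finset.sum_filter_of_ne (p := fun k => x k o ≠ 0)
    (fun k _ h => right_ne_zero_of_mul h)] at hsum
  rw [← hsum, ← nsmul_eq_mul, ← Finset.sum_const]
  refine Finset.sum_congr rfl fun k hk => ?_
  rw [← hG.mul_entry_eq_of_column hcol hx hy hxy hι hi (Finset.mem_filter.mp hk).2, mul_comm]

open Classical in
theorem entry_eq_zero_or_exists_card (hG : IsMonomialOvergroup G) (hcol : MonomialOfColumn G)
    {x y : Matrix ι ι F} (hx : x ∈ G) (hy : y ∈ G)
    (hxy : x * y = 1) (hι : 3 ≤ Fintype.card ι ∨ Fintype.card ι = 2 ∧ ∃ z : F, z ^ 2 = -1)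
    (i o : ι) : x i o * y o i = 0 ∨ ∃ m : ℕ, 1 ≤ m ∧ m ≤ Fintype.card ι ∧
      (m : F) * (x i o * y o i) = 1 := by
  by_cases hi : x i o = 0
  · left; rw [hi, zero_mul]
  · exact Or.inr ⟨_, Finset.card_pos.mpr ⟨i, by simpa using hi⟩, Finset.card_le_univ _,
      hG.card_mul_entry_eq_one hcol hx hy hxy hι hi⟩

end IsMonomialOvergroup

end ColumnWeights

section SmallRank

open Polynomial in
theorem exists_ne_zero_avoiding {F : Type*} [Field F] [Fintype F] (V : Finset F) (hV : 0 ∉ V)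
    (h f w : F[X]) (hh : h.eval 0 ≠ 0) (hf : f.eval 0 ≠ 0) (hw : w.eval 0 = 0) {d : ℕ}
    (hhd : h.natDegree ≤ 2) (hfd : f.natDegree ≤ d) (hwd : w.natDegree ≤ d)
    (hcard : 3 + d * V.card < Fintype.card F) :
    ∃ b : F, b ≠ 0 ∧ h.eval b ≠ 0 ∧ ∀ v ∈ V, v * f.eval b ≠ w.eval b := by
  have hprod : (∏ v ∈ V, (C v * f - w)).eval 0 ≠ 0 := by
    rw [eval_prod]
    refine Finset.prod_ne_zero_iff.mpr fun v hv => ?_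
    simp only [eval_sub, eval_mul, eval_C, hw, sub_zero]
    exact mul_ne_zero (fun h => hV (h ▸ hv)) hf
  have hne : X * h * ∏ v ∈ V, (C v * f - w) ≠ 0 :=
    mul_ne_zero (mul_ne_zero X_ne_zero fun h0 => hh (by rw [h0, eval_zero]))
      fun h0 => hprod (by rw [h0, eval_zero])
  have hdeg : (∏ v ∈ V, (C v * f - w)).natDegree ≤ d * V.card := by
    refine (natDegree_prod_le _ _).trans ((Finset.sum_le_card_nsmul V _ d fun v _ => ?_).trans ?_)
    · exact (natDegree_sub_le _ _).trans (max_le ((natDegree_C_mul_le _ _).trans hfd) hwd)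
    · rw [smul_eq_mul, mul_comm]
  obtain ⟨b, hb⟩ := exists_eval_ne_zero_of_natDegree_lt_card _ hne (by
    have h1 := natDegree_mul_le (p := X * h) (q := ∏ v ∈ V, (C v * f - w))
    have h2 := natDegree_mul_le (p := (X : F[X])) (q := h)
    rw [natDegree_X] at h2
    omega)
  rw [eval_mul, eval_mul, eval_X, eval_prod] at hb
  refine ⟨b, left_ne_zero_of_mul (left_ne_zero_of_mul hb),
    right_ne_zero_of_mul (left_ne_zero_of_mul hb), fun v hv h0 => ?_⟩
  refine Finset.prod_ne_zero_iff.mp (right_ne_zero_of_mul hb) v hv ?_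
  rw [eval_sub, eval_mul, eval_C, h0, sub_self]

variable {ι F : Type*} [DecidableEq ι] [Fintype ι] [Field F]

theorem conj_diagonal_pair_apply {x y : Matrix ι ι F} (hyx : y * x = 1) {j l : ι} (hjl : j ≠ l)
    (b c : F) (o : ι) :
    (y * diagonal (Function.update (Function.update 1 j b) l c) * x) o o =
      1 + (b - 1) * (x j o * y o j) + (c - 1) * (x l o * y o l) := by
  have h1 : ∑ m, y o m * x m o = 1 := by rw [← mul_apply, hyx, one_apply_eq]
  have h2 : (b - 1) * (x j o * y o j) = ∑ m, if m = j then (b - 1) * (x m o * y o m) else 0 := by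
    simp
  have h3 : (c - 1) * (x l o * y o l) = ∑ m, if m = l then (c - 1) * (x m o * y o m) else 0 := by
    simp
  rw [mul_apply, h2, h3]
  nth_rw 1 [← h1]
  rw [← Finset.sum_add_distrib, ← Finset.sum_add_distrib]
  refine Finset.sum_congr rfl fun m _ => ?_
  rw [mul_diagonal]
  by_cases hl : m = l
  · subst hl; simp [Ne.symm hjl]; ring
  · by_cases hj : m = j
    · subst hj; simp [hl]; ring
    · simp [hl, hj]

theorem prod_update_pair {j l : ι} (hjl : j ≠ l) (b c : F) :
    ∏ m, Function.update (Function.update (1 : ι → F) j b) l c m = c * b := by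
  rw [Finset.prod_update_of_mem (Finset.mem_univ l),
    Finset.prod_update_of_mem (by simp [hjl])]
  simp

theorem diagonal_pair_mul_inv {j l : ι} {b c : F} (hb : b ≠ 0) (hc : c ≠ 0) :
    diagonal (Function.update (Function.update (1 : ι → F) j b) l c) *
      diagonal (Function.update (Function.update (1 : ι → F) j b⁻¹) l c⁻¹) = 1 := by
  rw [diagonal_mul_diagonal, ← diagonal_one]
  congr 1
  ext m
  by_cases hl : m = l
  · subst hl; simp [hc]
  · by_cases hj : m = j
    · subst hj; simp [hl, hb]
    · simp [hl, hj]

namespace IsMonomialOvergroup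

variable {G : Submonoid (Matrix ι ι F)}

theorem pair_conj_mem (hG : IsMonomialOvergroup G)
    {x y : Matrix ι ι F} (hx : x ∈ G) (hy : y ∈ G) (hxy : x * y = 1)
    {j l : ι} (hjl : j ≠ l) {b : F} (hb : b ≠ 0) :
    y * diagonal (Function.update (Function.update 1 j b) l b⁻¹) * x ∈ G ∧
    y * diagonal (Function.update (Function.update 1 j b⁻¹) l b) * x ∈ G ∧
    (y * diagonal (Function.update (Function.update 1 j b) l b⁻¹) * x) *
      (y * diagonal (Function.update (Function.update 1 j b⁻¹) l b) * x) = 1 := by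
  refine ⟨G.mul_mem (G.mul_mem hy (hG.diagonal_mem ?_)) hx,
    G.mul_mem (G.mul_mem hy (hG.diagonal_mem ?_)) hx, ?_⟩
  · rw [prod_update_pair hjl, inv_mul_cancel₀ hb]
  · rw [prod_update_pair hjl, mul_inv_cancel₀ hb]
  · have h := diagonal_pair_mul_inv (j := j) (l := l) hb (inv_ne_zero hb)
    rw [inv_inv] at h
    rw [show ∀ s t : Matrix ι ι F, y * s * x * (y * t * x) = y * (s * (x * y) * t) * x by
      intro s t; simp only [mul_assoc], hxy, mul_one, h, mul_one, mul_eq_one_comm.mp hxy]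

open Polynomial in
open Classical in
/-- A non-monomial element has no vanishing entries. -/
theorem entry_ne_zero_of_not_isMonomialMatrix (hG : IsMonomialOvergroup G)
    (hcol : MonomialOfColumn G) [Fintype F] (h2 : (2 : F) ≠ 0)
    (hι : 3 ≤ Fintype.card ι ∨ Fintype.card ι = 2 ∧ ∃ z : F, z ^ 2 = -1)
    (hι4 : Fintype.card ι ≤ 4) (V : Finset F) (hV0 : 0 ∉ V)
    (hV : ∀ m : ℕ, 1 ≤ m → m ≤ Fintype.card ι → (m : F) ≠ 0 → (m : F) ∈ V)
    (hcard : 3 + 2 * V.card < Fintype.card F) {x : Matrix ι ι F} (hx : x ∈ G)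
    (hxm : ¬ IsMonomialMatrix x) (l o : ι) : x l o ≠ 0 := by
  intro hl
  obtain ⟨y, hy, hxy⟩ := hG.exists_inv x hx
  obtain ⟨j, hj⟩ : ∃ j, x j o ≠ 0 := by
    by_contra! h
    exact hxm (hcol x hx o o fun k _ => h k)
  obtain ⟨j', hj'j, hj'⟩ : ∃ j', j' ≠ j ∧ x j' o ≠ 0 := by
    by_contra! h
    exact hxm (hcol x hx j o h)
  have hjl : j ≠ l := by rintro rfl; exact hj hl
  have hk := hG.card_mul_entry_eq_one hcol hx hy hxy hι hj
  set k := (Finset.univ.filter fun k => x k o ≠ 0).card with hkdef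
  have hk2 : 2 ≤ k := by
    rw [hkdef, ← Finset.card_pair hj'j]
    refine Finset.card_le_card fun m hm => ?_
    simp only [Finset.mem_insert, Finset.mem_singleton] at hm
    rcases hm with rfl | rfl <;> simp [hj, hj']
  have hkn : k < Fintype.card ι := by
    rw [← Finset.card_univ]
    exact Finset.card_lt_card (Finset.filter_ssubset.mpr ⟨l, Finset.mem_univ l, by simpa using hl⟩)
  have hk1 : (k : F) - 1 ≠ 0 := by
    have : k = 2 ∨ k = 3 := by omega
    rcases this with h | h <;> rw [h]
    · norm_num
    · norm_num; exact h2
  have hk0 : (k : F) ≠ 0 := left_ne_zero_of_mul_eq_one hk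
  set c := x j o * y o j with hc
  obtain ⟨b, hb, hfb, hvb⟩ := exists_ne_zero_avoiding V hV0
    ((X + C ((k : F) - 1)) * (C ((k : F) - 1) * X + 1))
    ((X + C ((k : F) - 1)) * (C ((k : F) - 1) * X + 1)) (C ((k : F) ^ 2) * X)
    (by simpa using hk1) (by simpa using hk1) (by simp) (d := 2) (by compute_degree)
    (by compute_degree) (by compute_degree!) hcard
  simp only [eval_mul, eval_add, eval_X, eval_C, eval_one] at hfb hvb
  obtain ⟨hY, hY', hYY⟩ := hG.pair_conj_mem hx hy hxy hjl hb
  have hP := hG.entry_eq_zero_or_exists_card hcol hY hY' hYY hι o o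
  rw [conj_diagonal_pair_apply (mul_eq_one_comm.mp hxy) hjl,
    conj_diagonal_pair_apply (mul_eq_one_comm.mp hxy) hjl, hl, zero_mul, mul_zero, mul_zero,
    add_zero, add_zero, ← hc] at hP
  have hident : (k : F) ^ 2 * b * ((1 + (b - 1) * c) * (1 + (b⁻¹ - 1) * c)) =
      (b + (k - 1)) * ((k - 1) * b + 1) := by
    have hc' : c = (k : F)⁻¹ := eq_inv_of_mul_eq_one_right hk
    rw [hc']
    field_simp
    ring
  rcases hP with h0 | ⟨m, hm1, hmn, hm⟩
  · rw [h0, mul_zero] at hident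
    exact hfb hident.symm
  · refine hvb m (hV m hm1 hmn (left_ne_zero_of_mul_eq_one hm)) ?_
    rw [← hident]
    linear_combination (k : F) ^ 2 * b * hm

open Polynomial in
open Classical in
theorem isMonomialMatrix_of_card_le_four (hG : IsMonomialOvergroup G) (hcol : MonomialOfColumn G)
    [Fintype F] [Nontrivial ι] (h2 : (2 : F) ≠ 0)
    (hι : 3 ≤ Fintype.card ι ∨ Fintype.card ι = 2 ∧ ∃ z : F, z ^ 2 = -1)
    (hι4 : Fintype.card ι ≤ 4) (V : Finset F) (hV0 : 0 ∉ V)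
    (hV : ∀ m : ℕ, 1 ≤ m → m ≤ Fintype.card ι → (m : F) ≠ 0 → (m : F) ∈ V)
    (hcard : 3 + 2 * V.card < Fintype.card F)
    (hcard' : (Fintype.card ι : F) ≠ 0 →
      3 + 4 * ({1, (Fintype.card ι : F)} : Finset F).card < Fintype.card F)
    {x : Matrix ι ι F} (hx : x ∈ G) : IsMonomialMatrix x := by
  by_contra hxm
  obtain ⟨y, hy, hxy⟩ := hG.exists_inv x hx
  have hfull {z : Matrix ι ι F} (hz : z ∈ G) (hzm : ¬ IsMonomialMatrix z) (i o : ι) :=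
    hG.entry_ne_zero_of_not_isMonomialMatrix hcol h2 hι hι4 V hV0 hV hcard hz hzm i o
  have hent {z w : Matrix ι ι F} (hz : z ∈ G) (hw : w ∈ G) (hzw : z * w = 1)
      (hzm : ¬ IsMonomialMatrix z) (i o : ι) :
      (Fintype.card ι : F) * (z i o * w o i) = 1 := by
    have := hG.card_mul_entry_eq_one hcol hz hw hzw hι (hfull hz hzm i o)
    rwa [Finset.filter_true_of_mem fun k _ => hfull hz hzm k o, Finset.card_univ] at this
  obtain ⟨j, l, hjl⟩ := exists_pair_ne ι
  set n : F := (Fintype.card ι : F) with hn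
  have hn0 : n ≠ 0 := left_ne_zero_of_mul_eq_one (hent hx hy hxy hxm j j)
  obtain ⟨b, hb, hgb, hvb⟩ := exists_ne_zero_avoiding {1, n} (by simp [hn0.symm])
    (X ^ 2 + C (n - 2) * X + 1 : F[X]) ((X ^ 2 + C (n - 2) * X + 1) ^ 2) (C (n ^ 2) * X ^ 2)
    (by simp) (by simp) (by simp) (d := 4) (by compute_degree)
    (by compute_degree) (by compute_degree!) (hcard' hn0)
  simp only [eval_mul, eval_add, eval_X, eval_C, eval_one, eval_pow] at hgb hvb
  have hyx : y * x = 1 := mul_eq_one_comm.mp hxy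
  obtain ⟨hZ, hZ', hZZ⟩ := hG.pair_conj_mem hy hx hyx hjl hb
  have hyj (m : ι) : y m j * x j m = n⁻¹ := by
    rw [mul_comm]; exact eq_inv_of_mul_eq_one_right (hent hx hy hxy hxm j m)
  set Z := x * diagonal (Function.update (Function.update 1 j b) l b⁻¹) * y with hZdef
  set Z' := x * diagonal (Function.update (Function.update 1 j b⁻¹) l b) * y with hZ'def
  have e1 : Z j j = 1 + (b - 1) * n⁻¹ + (b⁻¹ - 1) * n⁻¹ := by
    rw [hZdef, conj_diagonal_pair_apply hxy hjl, hyj, hyj]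
  have e2 : Z' j j = 1 + (b⁻¹ - 1) * n⁻¹ + (b - 1) * n⁻¹ := by
    rw [hZ'def, conj_diagonal_pair_apply hxy hjl, hyj, hyj]
  have hident : n ^ 2 * b ^ 2 * (Z j j * Z' j j) = (b ^ 2 + (n - 2) * b + 1) ^ 2 := by
    rw [e1, e2]
    field_simp
    ring
  have hZ0 : Z j j ≠ 0 := by
    intro h
    rw [h, zero_mul, mul_zero] at hident
    exact hgb (pow_eq_zero_iff two_ne_zero |>.mp hident.symm)
  by_cases hZm : IsMonomialMatrix Z
  · have h1 : Z j j * Z' j j = 1 := by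
      obtain ⟨σ, d, hd, hσ⟩ := hZm
      have hj : j = σ j := by
        by_contra h
        rw [hσ, monomialMatrix_apply, if_neg h] at hZ0
        exact hZ0 rfl
      have hZZ1 : Z' * Z = 1 := mul_eq_one_comm.mp hZZ
      have := congr_fun (congr_fun hZZ1 j) j
      rw [one_apply_eq, hσ, mul_monomialMatrix_apply, ← hj] at this
      rw [hσ, monomialMatrix_apply, if_pos hj]
      linear_combination this
    exact hvb 1 (by simp) (by rw [← hident, h1]; ring)
  · exact hvb n (by simp) (by
      rw [← hident]; linear_combination n ^ 2 * b ^ 2 * hent hZ hZ' hZZ hZm j j)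

end IsMonomialOvergroup

end SmallRank

section LargeRank

variable {ι F : Type*} [DecidableEq ι] [Fintype ι] [Field F]

/-- The matrices that preserve a set of vectors. -/
def preservingSubmonoid (W : Set (ι → F)) : Submonoid (Matrix ι ι F) where
  carrier := {m | ∀ v ∈ W, m *ᵥ v ∈ W}
  mul_mem' := fun {a b} ha hb v hv => by
    rw [← mulVec_mulVec]
    exact ha _ (hb v hv)
  one_mem' := fun v hv => by rwa [one_mulVec]

theorem monomialMatrix_mulVec (σ : Equiv.Perm ι) (d v : ι → F) (i : ι) :
    (monomialMatrix σ d *ᵥ v) i = d (σ⁻¹ i) * v (σ⁻¹ i) := by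
  simp only [mulVec, dotProduct, monomialMatrix_apply]
  rw [Finset.sum_eq_single (σ⁻¹ i)]
  · simp
  · intro j _ hj
    rw [if_neg, zero_mul]
    rintro rfl
    simp at hj
  · simp

theorem transvection_mulVec (i j : ι) (a : F) (v : ι → F) (k : ι) :
    (transvection i j a *ᵥ v) k = v k + if k = i then a * v j else 0 := by
  rw [transvection, add_mulVec, one_mulVec, Pi.add_apply, single_mulVec]
  simp [Function.update_apply]

open Classical in
/-- A nonempty finite set of nonzero vectors that is preserved by all invertible monomial matrices
and by some elementary transvection contains a vector without zero coordinates. -/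
theorem exists_full_vector [Fintype F] {W : Set (ι → F)} (hW : W.Nonempty) (hW0 : 0 ∉ W)
    (hmon : ContainsMonomials (preservingSubmonoid W))
    (hT : HasTransvection (preservingSubmonoid W)) : ∃ v ∈ W, ∀ i, v i ≠ 0 := by
  obtain ⟨v, hv, hmax⟩ := Set.exists_max_image W
    (fun v => (Finset.univ.filter fun k => v k ≠ 0).card) W.toFinite hW
  refine ⟨v, hv, fun k hk => ?_⟩
  obtain ⟨l, hl⟩ : ∃ l, v l ≠ 0 := by
    by_contra! h
    exact hW0 ((funext h : v = 0) ▸ hv)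
  obtain ⟨i, j, hij, a, ha, hTa⟩ := hT
  obtain ⟨σ, hσk, hσl⟩ := Equiv.Perm.exists_apply_pair_eq
    (show k ≠ l by rintro rfl; exact hl hk) hij
  have hmem := hTa _ (hmon σ 1 (fun _ => one_ne_zero) v hv)
  refine (hmax _ hmem).not_gt ?_
  have hcard : (Finset.univ.filter fun k => v k ≠ 0).card =
      (Finset.univ.filter fun k => (monomialMatrix σ 1 *ᵥ v) k ≠ 0).card := by
    refine Finset.card_bij (fun k _ => σ k) ?_ (fun _ _ _ _ h => σ.injective h) ?_
    · intro m hm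
      simpa [monomialMatrix_mulVec] using hm
    · intro m hm
      exact ⟨σ⁻¹ m, by simpa [monomialMatrix_mulVec] using hm, by simp⟩
  rw [hcard]
  have hi : (monomialMatrix σ 1 *ᵥ v) i = 0 := by
    rw [monomialMatrix_mulVec, ← hσk]; simp [hk]
  have hj : (monomialMatrix σ 1 *ᵥ v) j ≠ 0 := by
    rw [monomialMatrix_mulVec, ← hσl]; simpa using hl
  refine Finset.card_lt_card (Finset.ssubset_iff_of_subset ?_ |>.mpr ⟨i, ?_, by simp [hi]⟩)
  · intro m hm
    have hm' : (monomialMatrix σ 1 *ᵥ v) m ≠ 0 := (Finset.mem_filter.mp hm).2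
    refine Finset.mem_filter.mpr ⟨Finset.mem_univ _, ?_⟩
    rw [transvection_mulVec, if_neg (by rintro rfl; exact hm' hi), add_zero]
    exact hm'
  · refine Finset.mem_filter.mpr ⟨Finset.mem_univ _, ?_⟩
    rw [transvection_mulVec, if_pos rfl, hi, zero_add]
    exact mul_ne_zero ha hj

theorem nat_card_perm_fixing (o : ι) :
    Nat.card {τ : Equiv.Perm ι // τ o = o} = (Fintype.card ι - 1).factorial := by
  have e : Equiv.Perm {j // j ≠ o} ≃ {τ : Equiv.Perm ι // τ o = o} :=
    (Equiv.Perm.subtypeEquivSubtypePerm (· ≠ o)).trans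
      (Equiv.subtypeEquivRight fun f => by simp)
  rw [← Nat.card_congr e, Nat.card_eq_fintype_card, Fintype.card_perm,
    Fintype.card_subtype_compl, Fintype.card_subtype_eq]

theorem alternatingGroup_hom_eq_one (hι : 5 ≤ Fintype.card ι) (o : ι)
    (θ : alternatingGroup ι →* Equiv.Perm ι) (hθ : ∀ σ, θ σ o = o) (σ : alternatingGroup ι) :
    θ σ = 1 := by
  have : Nontrivial ι := Fintype.one_lt_card_iff_nontrivial.mp (by omega)
  have hsimple := alternatingGroup.isSimpleGroup (α := ι) (by rwa [Nat.card_eq_fintype_card])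
  rcases (θ.normal_ker).eq_bot_or_eq_top with h | h
  · exfalso
    have hinj : Function.Injective
        (fun σ => ⟨θ σ, hθ σ⟩ : alternatingGroup ι → {τ : Equiv.Perm ι // τ o = o}) :=
      fun a b hab => (MonoidHom.ker_eq_bot_iff θ).mp h (congrArg Subtype.val hab)
    have h1 := Nat.card_le_card_of_injective _ hinj
    rw [nat_card_perm_fixing] at h1
    have h2 := two_mul_nat_card_alternatingGroup (α := ι)
    rw [Nat.card_eq_fintype_card (α := Equiv.Perm ι), Fintype.card_perm] at h2
    obtain ⟨m, hm⟩ : ∃ m, Fintype.card ι = m + 1 := ⟨Fintype.card ι - 1, by omega⟩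
    rw [hm, Nat.factorial_succ] at h2
    rw [hm, Nat.add_sub_cancel] at h1
    have := m.factorial_pos
    have : 3 * m.factorial ≤ (m + 1) * m.factorial := Nat.mul_le_mul_right _ (by omega)
    omega
  · exact (θ.mem_ker).mp (h ▸ Subgroup.mem_top σ)

namespace IsMonomialOvergroup

variable {G : Submonoid (Matrix ι ι F)}

theorem exists_full_column (hG : IsMonomialOvergroup G) [Fintype F] (h2 : (2 : F) ≠ 0)
    (hF : 7 ≤ Fintype.card F ∨ Fintype.card F = 5 ∧ 3 ≤ Fintype.card ι) {x : Matrix ι ι F}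
    (hx : x ∈ G) (hxm : ¬ IsMonomialMatrix x) (o : ι) : ∃ z ∈ G, ∀ i, z i o ≠ 0 := by
  by_contra! hzero
  set W : Set (ι → F) := {v | ∃ z ∈ G, v = fun k => z k o} with hW
  have hle : G ≤ preservingSubmonoid W := by
    rintro m hm _ ⟨z, hz, rfl⟩
    exact ⟨m * z, G.mul_mem hm hz, rfl⟩
  have hmon : ContainsMonomials (preservingSubmonoid W) := by
    rintro σ d hd _ ⟨z, hz, rfl⟩
    obtain ⟨i, hi⟩ := hzero z hz
    set δ := (monomialMatrix σ d).det with hδ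
    have hδ0 : δ ≠ 0 := det_monomialMatrix_ne_zero σ hd
    have hdet : (monomialMatrix σ (Function.update d i (δ⁻¹ * d i))).det = 1 := by
      rw [det_monomialMatrix, Finset.prod_update_of_mem (Finset.mem_univ i), mul_assoc,
        ← Finset.erase_eq, Finset.mul_prod_erase _ _ (Finset.mem_univ i), mul_left_comm,
        ← det_monomialMatrix, inv_mul_cancel₀ hδ0]
    refine ⟨_, G.mul_mem (hG.monomial_mem σ _ hdet) hz, funext fun k => ?_⟩
    rw [monomialMatrix_mulVec, monomialMatrix_mul_apply]
    by_cases hk : σ⁻¹ k = i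
    · rw [hk, hi, mul_zero, mul_zero]
    · rw [Function.update_of_ne hk]
  obtain ⟨y, hy, hxy⟩ := hG.exists_inv x hx
  obtain ⟨_, ⟨z, hz, rfl⟩, hfull⟩ := exists_full_vector (W := W) ⟨_, 1, G.one_mem, rfl⟩ (by
    rintro ⟨z, hz, h0⟩
    have := hG.det_eq_one z hz
    rw [det_eq_zero_of_column_eq_zero o fun i => (congrFun h0 i).symm] at this
    exact zero_ne_one this) hmon
    (hasTransvection_of_not_isMonomialMatrix hmon h2 hF (hle hx) (hle hy) hxy hxm)
  obtain ⟨i, hi⟩ := hzero z hz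
  exact hfull i hi

theorem isMonomialMatrix_of_five_le_card (hG : IsMonomialOvergroup G)
    [Fintype F] (hcol : MonomialOfColumn G)
    (h2 : (2 : F) ≠ 0) (hF : 7 ≤ Fintype.card F ∨ Fintype.card F = 5) (hι : 5 ≤ Fintype.card ι)
    {x : Matrix ι ι F} (hx : x ∈ G) : IsMonomialMatrix x := by
  by_contra hxm
  have : Nontrivial ι := Fintype.one_lt_card_iff_nontrivial.mp (by omega)
  obtain ⟨o⟩ : Nonempty ι := inferInstance
  obtain ⟨z, hz, hfull⟩ := hG.exists_full_column h2
    (hF.imp_right fun h => ⟨h, by omega⟩) hx hxm o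
  obtain ⟨w, hw, hzw⟩ := hG.exists_inv z hz
  set a : Equiv.Perm ι → Matrix ι ι F :=
    fun σ => monomialMatrix σ fun i => z (σ i) o / z i o with ha
  have ha_mul (σ τ : Equiv.Perm ι) : a (σ * τ) = a σ * a τ := by
    rw [ha]
    dsimp only
    rw [monomialMatrix_mul]
    congr 1
    funext i
    rw [Equiv.Perm.mul_apply, div_mul_div_cancel₀ (hfull _)]
  have ha_mem (σ : alternatingGroup ι) : a σ ∈ G := by
    refine hG.monomial_mem _ _ ?_
    rw [det_monomialMatrix, Finset.prod_div_distrib, Equiv.prod_comp (σ : Equiv.Perm ι)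
      (fun i => z i o), div_self (Finset.prod_ne_zero_iff.mpr fun k _ => hfull k),
      Equiv.Perm.mem_alternatingGroup.mp σ.2]
    simp
  have hconj (σ : alternatingGroup ι) := hcol.conj_isMonomialMatrix hz hw (ha_mem σ) hzw (o := o)
    (c := 1) (fun k => by
      rw [ha, monomialMatrix_mul_apply]
      rw [← Equiv.Perm.mul_apply, mul_inv_cancel, Equiv.Perm.one_apply, one_mul,
        div_mul_cancel₀ _ (hfull _)])
  choose τ d hd hτ using fun σ => (hconj σ).1
  have hφ_mul (σ ρ : alternatingGroup ι) :
      w * a (σ * ρ : alternatingGroup ι) * z = (w * a σ * z) * (w * a ρ * z) := by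
    rw [Subgroup.coe_mul, ha_mul, show w * a σ * z * (w * a ρ * z) =
      w * (a σ * (z * w) * a ρ) * z by simp only [mul_assoc], hzw, mul_one]
  let θ : alternatingGroup ι →* Equiv.Perm ι := MonoidHom.mk' τ fun σ ρ => by
    refine monomialMatrix_injective (e := fun j => d σ (τ ρ j) * d ρ j) (hd (σ * ρ)) ?_
    rw [← monomialMatrix_mul, ← hτ, ← hτ, ← hτ, hφ_mul]
  have hθ (σ : alternatingGroup ι) : θ σ = 1 := by
    refine alternatingGroup_hom_eq_one hι o θ (fun σ => ?_) σ
    by_contra hne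
    have h := (hconj σ).2 (τ σ o)
    rw [hτ, monomialMatrix_apply, if_pos rfl, one_apply_ne (show τ σ o ≠ o from hne), mul_zero] at h
    exact hd σ o h
  have hcomm (σ ρ : alternatingGroup ι) : σ * ρ = ρ * σ := by
    have h1 (σ : alternatingGroup ι) : w * a σ * z = diagonal (d σ) := by
      rw [hτ, ← monomialMatrix_one_eq_diagonal]
      exact congrArg (monomialMatrix · _) (hθ σ)
    have h2 : w * a (σ * ρ : alternatingGroup ι) * z = w * a (ρ * σ : alternatingGroup ι) * z := by
      rw [hφ_mul, hφ_mul, h1, h1, diagonal_mul_diagonal, diagonal_mul_diagonal]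
      simp only [mul_comm]
    have h3 : a (σ * ρ : alternatingGroup ι) = a (ρ * σ : alternatingGroup ι) := by
      have := congrArg (fun m => z * m * w) h2
      simpa only [mul_assoc, hzw, mul_one, ← mul_assoc z w, one_mul] using this
    exact Subtype.ext (monomialMatrix_injective (fun j => div_ne_zero (hfull _) (hfull _)) h3)
  have hbot := alternatingGroup.center_eq_bot (α := ι) (by rw [Nat.card_eq_fintype_card]; omega)
  have hsimple := alternatingGroup.isSimpleGroup (α := ι) (by rwa [Nat.card_eq_fintype_card])
  obtain ⟨g, hg⟩ := exists_ne (1 : alternatingGroup ι)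
  have : g ∈ Subgroup.center (alternatingGroup ι) := Subgroup.mem_center_iff.mpr fun h => hcomm h g
  rw [hbot] at this
  exact hg this

end IsMonomialOvergroup

end LargeRank

section Maximality

variable {ι F : Type*} [DecidableEq ι] [Fintype ι] [Field F]

/-- The nonzero scalar multiples of the elements of a monoid of matrices. -/
def scalarMultiples (G : Submonoid (Matrix ι ι F)) : Submonoid (Matrix ι ι F) where
  carrier := {x | ∃ c : F, c ≠ 0 ∧ ∃ m ∈ G, x = c • m}
  mul_mem' := by
    rintro _ _ ⟨c, hc, m, hm, rfl⟩ ⟨c', hc', m', hm', rfl⟩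
    exact ⟨c * c', mul_ne_zero hc hc', m * m', G.mul_mem hm hm', smul_mul_smul_comm c m c' m'⟩
  one_mem' := ⟨1, one_ne_zero, 1, G.one_mem, (one_smul F _).symm⟩

namespace IsMonomialOvergroup

variable {G : Submonoid (Matrix ι ι F)}

theorem hasTransvection_of_card_eq_three_five (hG : IsMonomialOvergroup G)
    [Fintype F] (hι : Fintype.card ι = 3)
    (hF : Fintype.card F = 5) (h2 : (2 : F) ≠ 0) {x : Matrix ι ι F} (hx : x ∈ G)
    (hxm : ¬ IsMonomialMatrix x) : HasTransvection G := by
  have hpow {c : F} (hc : c ≠ 0) : c ^ 4 = 1 := by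
    have := FiniteField.pow_card_sub_one_eq_one c hc
    rwa [hF] at this
  have hle : G ≤ scalarMultiples G := fun m hm => ⟨1, one_ne_zero, m, hm, (one_smul F m).symm⟩
  have hmon : ContainsMonomials (scalarMultiples G) := by
    intro σ d hd
    set δ := (monomialMatrix σ d).det with hδ
    have hδ0 : δ ≠ 0 := det_monomialMatrix_ne_zero σ hd
    refine ⟨δ ^ 3, pow_ne_zero 3 hδ0, δ • monomialMatrix σ d, ?_, ?_⟩
    · rw [smul_monomialMatrix]
      refine hG.monomial_mem _ _ ?_
      rw [← smul_monomialMatrix, det_smul, hι, ← hδ, ← pow_succ, hpow hδ0]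
    · rw [smul_smul, ← pow_succ, hpow hδ0, one_smul]
  obtain ⟨y, hy, hxy⟩ := hG.exists_inv x hx
  obtain ⟨i, j, hij, a, ha, c, hc, m, hm, hT⟩ := hasTransvection_of_not_isMonomialMatrix hmon h2
    (Or.inr ⟨hF, hι.ge⟩) (hle hx) (hle hy) hxy hxm
  have hdet := congrArg det hT
  rw [det_transvection_of_ne i j hij, det_smul, hG.det_eq_one m hm, hι, mul_one] at hdet
  have hc1 : c = 1 := by
    have := hpow hc
    rw [pow_succ, ← hdet, one_mul] at this
    exact this
  refine ⟨i, j, hij, a, ha, ?_⟩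
  rw [hT, hc1, one_smul]
  exact hm

open Classical in
theorem isMonomialMatrix_of_card_le_four_of_card_mod_four (hG : IsMonomialOvergroup G)
    [Fintype F] [Nontrivial ι]
    (hcol : MonomialOfColumn G)
    (hq : Fintype.card F % 4 = 1) (h2 : (2 : F) ≠ 0) (hι : 2 ≤ Fintype.card ι)
    (hι4 : Fintype.card ι ≤ 4)
    (hF : 13 ≤ Fintype.card F ∨ Fintype.card F = 9 ∧ 3 ≤ Fintype.card ι)
    {x : Matrix ι ι F} (hx : x ∈ G) : IsMonomialMatrix x := by
  have hι' : 3 ≤ Fintype.card ι ∨ Fintype.card ι = 2 ∧ ∃ z : F, z ^ 2 = -1 := by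
    rcases hι.eq_or_lt with h | h
    · obtain ⟨z, hz⟩ := FiniteField.isSquare_neg_one_iff (F := F).mpr (by omega)
      exact Or.inr ⟨h.symm, z, by rw [hz, sq]⟩
    · exact Or.inl h
  rcases hF with hF | ⟨hF, hι3⟩
  · refine hG.isMonomialMatrix_of_card_le_four hcol h2 hι' hι4
      (((Finset.Icc 1 4).image (Nat.cast : ℕ → F)).erase 0) (Finset.notMem_erase _ _)
      (fun m hm1 hm hm0 => Finset.mem_erase.mpr ⟨hm0, Finset.mem_image.mpr
        ⟨m, Finset.mem_Icc.mpr ⟨hm1, hm.trans hι4⟩, rfl⟩⟩) ?_ (fun _ => ?_) hx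
    · have h1 := Finset.card_erase_le (s := (Finset.Icc 1 4).image (Nat.cast : ℕ → F)) (a := 0)
      have h2 := Finset.card_image_le (s := Finset.Icc 1 4) (f := (Nat.cast : ℕ → F))
      rw [Nat.card_Icc] at h2
      omega
    · have := Finset.card_le_two (a := (1 : F)) (b := (Fintype.card ι : F))
      omega
  · have h3 : (3 : F) = 0 := by
      have := Nat.cast_card_eq_zero F
      rw [hF] at this
      have h9 : (3 : F) ^ 2 = 0 := by rw [← this]; norm_num
      exact pow_eq_zero_iff two_ne_zero |>.mp h9
    have h4 : (4 : F) = 1 := by linear_combination h3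
    refine hG.isMonomialMatrix_of_card_le_four hcol h2 hι' hι4 {1, 2} (by simp [h2.symm])
      (fun m hm1 hm hm0 => ?_) ?_ (fun hn0 => ?_) hx
    · have hm4 := hm.trans hι4
      interval_cases m
      · simp
      · simp
      · exact absurd h3 (by simpa using hm0)
      · simp [h4]
    · have := Finset.card_le_two (a := (1 : F)) (b := 2)
      omega
    · have : Fintype.card ι = 3 ∨ Fintype.card ι = 4 := by omega
      rcases this with h | h
      · rw [h] at hn0
        exact absurd h3 (by simpa using hn0)
      · rw [h, hF]
        simp [h4]

theorem hasTransvection_of_not_isMonomialMatrix (hG : IsMonomialOvergroup G)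
    [Fintype F] (hq : Fintype.card F % 4 = 1)
    (hι : 2 ≤ Fintype.card ι) (hι4 : ¬ (Fintype.card ι = 4 ∧ Fintype.card F = 5))
    (hι2 : Fintype.card ι = 2 → 13 ≤ Fintype.card F) (h2 : (2 : F) ≠ 0) {x : Matrix ι ι F}
    (hx : x ∈ G) (hxm : ¬ IsMonomialMatrix x) : HasTransvection G := by
  have hF1 : 1 < Fintype.card F := Fintype.one_lt_card
  by_cases h35 : Fintype.card ι = 3 ∧ Fintype.card F = 5
  · exact hG.hasTransvection_of_card_eq_three_five h35.1 h35.2 h2 hx hxm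
  by_contra hT
  have hcol : MonomialOfColumn G := fun z hz i o hio => by
    by_contra hzm
    exact hT (hG.hasTransvection_of_column h2 (by omega) hz hzm hio)
  rcases le_or_gt (Fintype.card ι) 4 with h | h
  · have : Nontrivial ι := Fintype.one_lt_card_iff_nontrivial.mp hι
    exact hxm (hG.isMonomialMatrix_of_card_le_four_of_card_mod_four hcol hq h2 hι h (by omega) hx)
  · exact hxm (hG.isMonomialMatrix_of_five_le_card hcol h2 (by omega) h hx)

end IsMonomialOvergroup

end Maximality

section MonomialSubgroup

theorem Matrix.SpecialLinearGroup.coe_mul_coe_inv {ι F : Type*} [DecidableEq ι] [Fintype ι]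
    [CommRing F] (A : SpecialLinearGroup ι F) :
    (A : Matrix ι ι F) * ((A⁻¹ : SpecialLinearGroup ι F) : Matrix ι ι F) = 1 := by
  rw [← Matrix.SpecialLinearGroup.coe_mul, mul_inv_cancel, Matrix.SpecialLinearGroup.coe_one]

theorem not_isMonomialMatrix_transvection {ι F : Type*} [DecidableEq ι] [Field F]
    {i j : ι} (hij : i ≠ j) {a : F} (ha : a ≠ 0) :
    ¬ IsMonomialMatrix (transvection i j a) := by
  rintro ⟨σ, d, hd, h⟩
  have h1 := congrFun (congrFun h i) j
  have h2 := congrFun (congrFun h j) j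
  rw [monomialMatrix_apply] at h1 h2
  simp only [transvection, Matrix.add_apply, one_apply_ne hij, single_apply_same, zero_add] at h1
  simp only [transvection, Matrix.add_apply, one_apply_eq, single_apply, hij, false_and, if_false,
    add_zero] at h2
  have h3 : i = σ j := by by_contra hne; rw [if_neg hne] at h1; exact ha h1
  have h4 : j = σ j := by by_contra hne; rw [if_neg hne] at h2; exact one_ne_zero h2
  exact hij (h3.trans h4.symm)

variable (ι F : Type*) [DecidableEq ι] [Fintype ι] [Field F]

/-- The subgroup of monomial matrices in the special linear group. -/
def monomialSubgroup : Subgroup (SpecialLinearGroup ι F) where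
  carrier := {A | IsMonomialMatrix (A : Matrix ι ι F)}
  mul_mem' := fun hA hB => hA.mul hB
  one_mem' := ⟨1, 1, fun _ => one_ne_zero, (monomialMatrix_one_eq_diagonal 1).symm⟩
  inv_mem' := fun {A} hA => hA.of_mul_eq_one A.coe_mul_coe_inv

variable {ι F}

theorem center_le_monomialSubgroup :
    Subgroup.center (SpecialLinearGroup ι F) ≤ monomialSubgroup ι F := by
  intro A hA
  obtain ⟨r, -, hr⟩ := Matrix.SpecialLinearGroup.mem_center_iff.mp hA
  have hrA : (A : Matrix ι ι F) = diagonal fun _ => r := by rw [← hr]; rfl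
  have hdet := A.det_coe
  rw [hrA, det_diagonal] at hdet
  refine ⟨1, fun _ => r, fun j => ?_, by rw [hrA, monomialMatrix_one_eq_diagonal]⟩
  exact Finset.prod_ne_zero_iff.mp (hdet ▸ one_ne_zero) j (Finset.mem_univ j)

theorem monomialSubgroup_ne_top [Nontrivial ι] : monomialSubgroup ι F ≠ ⊤ := by
  obtain ⟨i, j, hij⟩ := exists_pair_ne ι
  intro h
  have : SpecialLinearGroup.transvection hij (1 : F) ∈ monomialSubgroup ι F :=
    h ▸ Subgroup.mem_top _
  exact not_isMonomialMatrix_transvection hij one_ne_zero this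

theorem isMonomialOvergroup_of_monomialSubgroup_le {M : Subgroup (SpecialLinearGroup ι F)}
    (hM : monomialSubgroup ι F ≤ M) :
    IsMonomialOvergroup (M.toSubmonoid.map SpecialLinearGroup.coeMonoidHom) where
  det_eq_one := by
    rintro _ ⟨A, -, rfl⟩
    exact A.det_coe
  exists_inv := by
    rintro _ ⟨A, hA, rfl⟩
    refine ⟨_, ⟨A⁻¹, M.inv_mem hA, rfl⟩, ?_⟩
    rw [← map_mul, mul_inv_cancel, map_one]
  monomial_mem := fun σ d h =>
    ⟨⟨monomialMatrix σ d, h⟩, hM ⟨σ, d, ne_zero_of_det_monomialMatrix h, rfl⟩, rfl⟩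

theorem isCoatom_monomialSubgroup [Fintype F] (hq : Fintype.card F % 4 = 1)
    (hι : 2 ≤ Fintype.card ι) (hι4 : ¬ (Fintype.card ι = 4 ∧ Fintype.card F = 5))
    (hι2 : Fintype.card ι = 2 → 13 ≤ Fintype.card F) (h2 : (2 : F) ≠ 0) :
    IsCoatom (monomialSubgroup ι F) := by
  have : Nontrivial ι := Fintype.one_lt_card_iff_nontrivial.mp hι
  refine ⟨monomialSubgroup_ne_top, fun M hM => ?_⟩
  obtain ⟨A, hA, hAm⟩ := SetLike.exists_of_lt hM
  have hG := isMonomialOvergroup_of_monomialSubgroup_le hM.le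
  have hT := hG.hasTransvection_of_not_isMonomialMatrix hq hι hι4 hι2 h2 ⟨A, hA, rfl⟩ hAm
  refine eq_top_iff.mpr fun B _ => ?_
  obtain ⟨C, hC, hCB⟩ := hG.mem_of_hasTransvection h2 hT B.det_coe
  rwa [← show C = B from Subtype.ext hCB]

theorem slDecompStabilizer_coordinate_lines (F : Type*) [Field F] (n : ℕ) :
    slDecompStabilizer F n (Set.range fun i : Fin n => Submodule.span F {Pi.single i (1 : F)}) =
      monomialSubgroup (Fin n) F := by
  ext A
  have hmap (j : Fin n) : Submodule.map (toLin' (A : Matrix (Fin n) (Fin n) F))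
      (Submodule.span F {Pi.single j (1 : F)}) =
        Submodule.span F {fun k => (A : Matrix (Fin n) (Fin n) F) k j} := by
    rw [Submodule.map_span, Set.image_singleton, toLin'_apply, mulVec_single_one]
    rfl
  change (fun W => Submodule.map (toLin' (A : Matrix (Fin n) (Fin n) F)) W) '' _ = _ ↔ _
  rw [← Set.range_comp]
  simp only [Function.comp_def, hmap]
  constructor
  · intro h
    refine isMonomialMatrix_of_column A.coe_mul_coe_inv fun j => ?_
    obtain ⟨i, hi⟩ := h.subset ⟨j, rfl⟩
    have hmem : (fun k => (A : Matrix (Fin n) (Fin n) F) k j) ∈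
        Submodule.span F {Pi.single i (1 : F)} := by
      simp only at hi
      rw [hi]
      exact Submodule.mem_span_singleton_self _
    obtain ⟨c, hc⟩ := Submodule.mem_span_singleton.mp hmem
    refine ⟨i, fun k hk => ?_⟩
    rw [← congrFun hc k]
    simp [hk]
  · rintro ⟨σ, d, hd, h⟩
    have hspan (j : Fin n) : Submodule.span F {fun k => (A : Matrix (Fin n) (Fin n) F) k j} =
        Submodule.span F {Pi.single (σ j) (1 : F)} := by
      have hcol : (fun k => (A : Matrix (Fin n) (Fin n) F) k j) =
          d j • Pi.single (σ j) (1 : F) := by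
        funext k
        rw [h, monomialMatrix_apply]
        by_cases hk : k = σ j <;> simp [hk]
      rw [hcol, Submodule.span_singleton_smul_eq (IsUnit.mk0 _ (hd j))]
    simp only [hspan]
    have := σ.surjective.range_comp fun i => Submodule.span F {Pi.single i (1 : F)}
    simpa only [Function.comp_def] using this

end MonomialSubgroup

theorem isCoatom_map_mk_iff {G : Type*} [Group G] {N H : Subgroup G} [N.Normal] (h : N ≤ H) :
    IsCoatom (H.map (QuotientGroup.mk' N)) ↔ IsCoatom H := by
  have hcomap : (H.map (QuotientGroup.mk' N)).comap (QuotientGroup.mk' N) = H := by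
    rw [Subgroup.comap_map_eq_self]
    rwa [QuotientGroup.ker_mk']
  constructor
  · intro hc
    rw [← hcomap]
    exact Subgroup.isCoatom_comap_of_surjective (QuotientGroup.mk'_surjective N) hc
  · rintro ⟨hne, hmax⟩
    refine ⟨fun htop => hne ?_, fun M hM => ?_⟩
    · rw [← hcomap, htop, Subgroup.comap_top]
    · have hlt : H < M.comap (QuotientGroup.mk' N) := by
        rw [← hcomap]
        exact (Subgroup.comap_lt_comap_of_surjective (QuotientGroup.mk'_surjective N)).mpr hM
      rw [← Subgroup.map_comap_eq_self_of_surjective (QuotientGroup.mk'_surjective N) M,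
        hmax _ hlt, Subgroup.map_top_of_surjective _ (QuotientGroup.mk'_surjective N)]

section NonMaximal

variable {F : Type*} [Field F]

/-- The trace zero elements of `SL₂` that are diagonal, or antidiagonal with entries of equal
square. -/
def quaternionSet (F : Type*) [Field F] : Set (SpecialLinearGroup (Fin 2) F) :=
  {B | B.1 0 0 + B.1 1 1 = 0 ∧
    (B.1 0 1 = 0 ∧ B.1 1 0 = 0 ∨ B.1 0 0 = 0 ∧ B.1 0 1 ^ 2 = B.1 1 0 ^ 2)}

theorem mem_quaternionSet_conj_iff (A B : SpecialLinearGroup (Fin 2) F)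
    (hB : B.1 0 0 + B.1 1 1 = 0) :
    A * B * A⁻¹ ∈ quaternionSet F ↔
      (-(A.1 0 0 * B.1 0 0 + A.1 0 1 * B.1 1 0) * A.1 0 1 +
          (A.1 0 0 * B.1 0 1 - A.1 0 1 * B.1 0 0) * A.1 0 0 = 0 ∧
        (A.1 1 0 * B.1 0 0 + A.1 1 1 * B.1 1 0) * A.1 1 1 -
          (A.1 1 0 * B.1 0 1 - A.1 1 1 * B.1 0 0) * A.1 1 0 = 0) ∨
      (A.1 0 0 * B.1 0 0 + A.1 0 1 * B.1 1 0) * A.1 1 1 -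
          (A.1 0 0 * B.1 0 1 - A.1 0 1 * B.1 0 0) * A.1 1 0 = 0 ∧
        (-(A.1 0 0 * B.1 0 0 + A.1 0 1 * B.1 1 0) * A.1 0 1 +
          (A.1 0 0 * B.1 0 1 - A.1 0 1 * B.1 0 0) * A.1 0 0) ^ 2 =
        ((A.1 1 0 * B.1 0 0 + A.1 1 1 * B.1 1 0) * A.1 1 1 -
          (A.1 1 0 * B.1 0 1 - A.1 1 1 * B.1 0 0) * A.1 1 0) ^ 2 := by
  have hconj : (A * B * A⁻¹).1 =
      !![A.1 0 0, A.1 0 1; A.1 1 0, A.1 1 1] * !![B.1 0 0, B.1 0 1; B.1 1 0, -B.1 0 0] *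
        !![A.1 1 1, -A.1 0 1; -A.1 1 0, A.1 0 0] := by
    rw [← eq_neg_of_add_eq_zero_right hB, ← eta_fin_two, ← eta_fin_two, ← adjugate_fin_two]
    rfl
  rw [mul_fin_two, mul_fin_two] at hconj
  have h00 := congrFun (congrFun hconj 0) 0
  have h01 := congrFun (congrFun hconj 0) 1
  have h10 := congrFun (congrFun hconj 1) 0
  have h11 := congrFun (congrFun hconj 1) 1
  simp only [of_apply, cons_val', cons_val_zero, cons_val_one, cons_val_fin_one] at h00 h01 h10 h11
  have htr : (A * B * A⁻¹).1 0 0 + (A * B * A⁻¹).1 1 1 = 0 := by rw [h00, h11]; ring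
  change (_ ∧ _) ↔ _
  rw [and_iff_right htr, h00, h01, h10]
  ring_nf

theorem exists_between_monomialSubgroup_fin_two [Fintype F] (h2 : (2 : F) ≠ 0)
    (h8 : ∀ a : F, a ≠ 0 → a ^ 8 = 1) {i : F} (hi : i ^ 2 = -1) :
    ∃ M, monomialSubgroup (Fin 2) F < M ∧ M ≠ ⊤ := by
  have hi0 : i ≠ 0 := by rintro rfl; simp at hi
  refine ⟨Subgroup.normalizer (quaternionSet F), ?_, ?_⟩
  · refine SetLike.lt_iff_le_and_exists.mpr ⟨?_, ?_⟩
    · rintro A ⟨σ, d, hd, hA⟩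
      refine Subgroup.mem_normalizer_fintype ?_
      rintro B ⟨htr, hB⟩
      refine (mem_quaternionSet_conj_iff A B htr).mpr ?_
      have hA' (k l : Fin 2) : A.1 k l = if k = σ l then d l else 0 := by
        rw [← monomialMatrix_apply, ← hA]
      have hdet := A.det_coe
      rw [det_fin_two] at hdet
      have hcases : A.1 0 1 = 0 ∧ A.1 1 0 = 0 ∨ A.1 0 0 = 0 ∧ A.1 1 1 = 0 := by
        have h01 : σ 0 ≠ σ 1 := σ.injective.ne zero_ne_one
        simp only [hA']
        generalize σ 0 = s at h01
        generalize σ 1 = t at h01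
        fin_cases s <;> fin_cases t <;> simp at h01 ⊢
      rcases hcases with ⟨hA1, hA2⟩ | ⟨hA1, hA2⟩
      · rw [hA1, hA2] at hdet ⊢
        have hA0 : A.1 0 0 ≠ 0 := fun h => by rw [h] at hdet; simp at hdet
        have h11 : A.1 1 1 = (A.1 0 0)⁻¹ := eq_inv_of_mul_eq_one_right (by linear_combination hdet)
        have := h8 _ hA0
        rw [h11]
        rcases hB with ⟨hb, hc⟩ | ⟨ha, hbc⟩
        · left; rw [hb, hc]; simp
        · right
          rw [ha]
          refine ⟨by ring, ?_⟩
          field_simp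
          linear_combination this * B.1 0 1 ^ 2 + hbc
      · rw [hA1, hA2] at hdet ⊢
        have hA0 : A.1 0 1 ≠ 0 := fun h => by rw [h] at hdet; simp at hdet
        have h10 : A.1 1 0 = -(A.1 0 1)⁻¹ := by
          field_simp
          linear_combination -hdet
        have := h8 _ hA0
        rw [h10]
        rcases hB with ⟨hb, hc⟩ | ⟨ha, hbc⟩
        · left; rw [hb, hc]; simp
        · right
          rw [ha]
          refine ⟨by ring, ?_⟩
          field_simp
          linear_combination this * B.1 1 0 ^ 2 - hbc
    · refine ⟨⟨!![(1 + i) / 2, (1 + i) / 2; (-1 + i) / 2, (1 - i) / 2], ?_⟩, ?_, ?_⟩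
      · rw [det_fin_two_of]
        field_simp
        linear_combination -2 * hi
      · refine Subgroup.mem_normalizer_fintype ?_
        rintro B ⟨htr, hB⟩
        refine (mem_quaternionSet_conj_iff _ B htr).mpr ?_
        simp only [of_apply, cons_val', cons_val_zero, cons_val_one, cons_val_fin_one]
        rcases hB with ⟨hb, hc⟩ | ⟨ha, hbc⟩
        · right
          rw [hb, hc]
          exact ⟨by ring, by linear_combination 32 * B.1 0 0 ^ 2 * (2⁻¹) ^ 4 * i * hi⟩
        · have : B.1 0 1 = B.1 1 0 ∨ B.1 0 1 = -B.1 1 0 := sq_eq_sq_iff_eq_or_eq_neg.mp hbc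
          rw [ha]
          rcases this with h | h <;> rw [h]
          · exact Or.inl ⟨by ring, by ring⟩
          · exact Or.inr ⟨by ring, by linear_combination 32 * B.1 1 0 ^ 2 * (2⁻¹) ^ 4 * i * hi⟩
      · rintro ⟨σ, d, hd, h⟩
        have hi1 : 1 + i ≠ 0 := fun h => h2 (by linear_combination (1 - i) * h + hi)
        have hi2 : -1 + i ≠ 0 := fun h => h2 (by linear_combination (-1 - i) * h + hi)
        have h0 := congrFun (congrFun h 0) 0
        have h1 := congrFun (congrFun h 1) 0
        rw [monomialMatrix_apply] at h0 h1
        generalize σ 0 = s at h0 h1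
        fin_cases s
        · simp [hi2, h2] at h1
        · simp [hi1, h2] at h0
  · intro htop
    have h1 : SpecialLinearGroup.transvection (zero_ne_one' (Fin 2)) (1 : F) ∈
        Subgroup.normalizer (quaternionSet F) := htop ▸ Subgroup.mem_top _
    let B : SpecialLinearGroup (Fin 2) F := ⟨!![i, 0; 0, -i], by
      rw [det_fin_two_of]; linear_combination -hi⟩
    have hB : B ∈ quaternionSet F := by
      refine ⟨?_, Or.inl ⟨?_, ?_⟩⟩ <;> simp [B]
    have h3 := (mem_quaternionSet_conj_iff _ B hB.1).mp ((h1 B).mp hB)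
    simp [B, Matrix.SpecialLinearGroup.transvection_coe] at h3
    have : 2 * i = 0 := by rcases h3 with h | ⟨-, h⟩ <;> linear_combination -h
    exact mul_ne_zero h2 hi0 this

/-- The vectors in `R⁴` with one or two nonzero coordinates, or with product of coordinates
`±1`. -/
def hammingSet (R : Type*) [CommRing R] [DecidableEq R] : Set (Fin 4 → R) :=
  {v | (Finset.univ.filter fun k => v k ≠ 0).card = 1 ∨
    (Finset.univ.filter fun k => v k ≠ 0).card = 2 ∨ (∏ k, v k) ^ 2 = 1}

instance {R : Type*} [CommRing R] [DecidableEq R] : DecidablePred (· ∈ hammingSet R) := fun v =>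
  inferInstanceAs (Decidable ((Finset.univ.filter fun k => v k ≠ 0).card = 1 ∨
    (Finset.univ.filter fun k => v k ≠ 0).card = 2 ∨ (∏ k, v k) ^ 2 = 1))

theorem mem_hammingSet_zmod_five (a b c d : ZMod 5) :
    ![a, b, c, d] ∈ hammingSet (ZMod 5) → ![a + b, a - b, c + d, d - c] ∈ hammingSet (ZMod 5) := by
  revert a b c d
  decide +kernel

theorem map_mem_hammingSet_iff {R S : Type*} [CommRing R] [CommRing S] [DecidableEq R]
    [DecidableEq S] (e : R ≃+* S) (v : Fin 4 → R) :
    (fun k => e (v k)) ∈ hammingSet S ↔ v ∈ hammingSet R := by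
  simp only [hammingSet, Set.mem_ofPred_eq, ne_eq, EmbeddingLike.map_eq_zero_iff, ← map_prod,
    ← map_pow, EmbeddingLike.map_eq_one_iff]

theorem mulVec_mem_hammingSet [Fintype F] [DecidableEq F] (hF : Fintype.card F = 5)
    {v : Fin 4 → F} (hv : v ∈ hammingSet F) :
    (!![1, 1, 0, 0; 1, -1, 0, 0; 0, 0, 1, 1; 0, 0, -1, 1] : Matrix (Fin 4) (Fin 4) F) *ᵥ v ∈
      hammingSet F := by
  let e : ZMod 5 ≃+* F := ZMod.ringEquivOfPrime F Nat.prime_five hF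
  obtain ⟨u, rfl⟩ : ∃ u : Fin 4 → ZMod 5, v = fun k => e (u k) :=
    ⟨fun k => e.symm (v k), by simp⟩
  rw [map_mem_hammingSet_iff] at hv
  convert (map_mem_hammingSet_iff e _).mpr (mem_hammingSet_zmod_five (u 0) (u 1) (u 2) (u 3) ?_)
    using 1
  · ext k
    fin_cases k <;> simp [mulVec, dotProduct, Fin.sum_univ_four] <;> ring
  · convert hv using 1
    ext k
    fin_cases k <;> rfl

open Pointwise in
theorem exists_between_monomialSubgroup_fin_four [Fintype F] (hF : Fintype.card F = 5) :
    ∃ M, monomialSubgroup (Fin 4) F < M ∧ M ≠ ⊤ := by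
  classical
  have h5 : (5 : F) = 0 := by
    have := FiniteField.cast_card_eq_zero F
    rw [hF] at this
    exact_mod_cast this
  refine ⟨MulAction.stabilizer (SpecialLinearGroup (Fin 4) F) (hammingSet F), ?_, ?_⟩
  · refine SetLike.lt_iff_le_and_exists.mpr ⟨?_, ?_⟩
    · rintro A ⟨σ, d, hd, hA⟩
      rw [MulAction.mem_stabilizer_set' (Set.toFinite _)]
      intro v hv
      have hdet := A.det_coe
      rw [hA, det_monomialMatrix] at hdet
      have hd2 : (∏ k, d k) ^ 2 = 1 := by
        rcases Int.units_eq_one_or (Equiv.Perm.sign σ) with h | h <;> rw [h] at hdet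
        · simp at hdet; rw [hdet]; simp
        · have : (∏ k, d k) = -1 := by
            simp at hdet; linear_combination -hdet
          rw [this]; simp
      have hAv (k : Fin 4) : (A • v) k = d (σ⁻¹ k) * v (σ⁻¹ k) := by
        rw [← monomialMatrix_mulVec, ← hA]
        rfl
      have hcard : (Finset.univ.filter fun k => (A • v) k ≠ 0).card =
          (Finset.univ.filter fun k => v k ≠ 0).card := by
        refine (Finset.card_equiv σ fun k => ?_).symm
        simp [hAv, hd]
      have hprod : (∏ k, (A • v) k) ^ 2 = (∏ k, v k) ^ 2 := by
        simp only [hAv]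
        rw [Equiv.prod_comp σ⁻¹ fun k => d k * v k, Finset.prod_mul_distrib, mul_pow, hd2, one_mul]
      change _ ∨ _ ∨ _
      rw [hcard, hprod]
      exact hv
    · refine ⟨⟨!![1, 1, 0, 0; 1, -1, 0, 0; 0, 0, 1, 1; 0, 0, -1, 1], ?_⟩, ?_, ?_⟩
      · simp [det_succ_row_zero, Fin.sum_univ_succ, Fin.succAbove]
        linear_combination -h5
      · refine (MulAction.mem_stabilizer_set' (Set.toFinite _)).mpr ?_
        exact fun v hv => mulVec_mem_hammingSet hF hv
      · rintro ⟨σ, d, hd, h⟩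
        have h0 := congrFun (congrFun h 0) 0
        have h1 := congrFun (congrFun h 1) 0
        rw [monomialMatrix_apply] at h0 h1
        generalize σ 0 = s at h0 h1
        by_cases hs : s = 0
        · subst hs; simp at h1
        · rw [if_neg (Ne.symm hs)] at h0; simp at h0
  · intro htop
    have h1 : Matrix.SpecialLinearGroup.transvection (show (0 : Fin 4) ≠ 1 by decide) (1 : F) ∈
        MulAction.stabilizer (SpecialLinearGroup (Fin 4) F) (hammingSet F) :=
      htop ▸ Subgroup.mem_top _
    rw [MulAction.mem_stabilizer_set' (Set.toFinite _)] at h1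
    have h3 := @h1 ![0, 1, 1, 0] (Or.inr (Or.inl ?_))
    · have : Matrix.SpecialLinearGroup.transvection (show (0 : Fin 4) ≠ 1 by decide) (1 : F) •
          (![0, 1, 1, 0] : Fin 4 → F) = ![1, 1, 1, 0] := by
        change transvection (0 : Fin 4) 1 (1 : F) *ᵥ _ = _
        ext k
        rw [transvection_mulVec]
        fin_cases k <;> simp
      rw [this] at h3
      simp [hammingSet, Finset.card_filter, Fin.sum_univ_four, Fin.prod_univ_four] at h3
    · simp [Finset.card_filter, Fin.sum_univ_four]

end NonMaximal

section Index

theorem padicValNat_two_pow_sub_one_of_odd {q j : ℕ} (hq : Odd q) (hq1 : 1 < q) (hj : Odd j) :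
    padicValNat 2 (q ^ j - 1) = padicValNat 2 (q - 1) := by
  have hodd : Odd (∑ i ∈ Finset.range j, q ^ i) := by
    rw [Finset.odd_sum_iff_odd_card_odd]
    simpa [hq.pow] using hj
  have h : (∑ i ∈ Finset.range j, q ^ i) * (q - 1) = q ^ j - 1 := by
    zify [Nat.one_le_pow j q (by lia), hq1.le]
    exact geom_sum_mul (q : ℤ) j
  rw [← h, padicValNat.mul hodd.pos.ne' (by lia),
    padicValNat.eq_zero_of_not_dvd hodd.not_two_dvd_nat, zero_add]

theorem padicValNat_two_prod_pow_sub_one {q e : ℕ} (hq : Odd q) (hq1 : 1 < q)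
    (he : padicValNat 2 (q + 1) = e + 1) (n : ℕ) :
    padicValNat 2 (∏ j ∈ Finset.range n, (q ^ (j + 1) - 1)) =
      padicValNat 2 n.factorial + n * padicValNat 2 (q - 1) + n / 2 * e := by
  have hpow (j : ℕ) : q ^ (j + 1) - 1 ≠ 0 := (Nat.sub_pos_of_lt (Nat.one_lt_pow (by lia) hq1)).ne'
  induction n with
  | zero => simp
  | succ n ih =>
    rw [Finset.prod_range_succ,
      padicValNat.mul (Finset.prod_ne_zero_iff.mpr fun j _ => hpow j) (hpow n), ih,
      Nat.factorial_succ, padicValNat.mul n.succ_ne_zero n.factorial_ne_zero]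
    rcases Nat.even_or_odd (n + 1) with hn | hn
    · have h := padicValNat.pow_two_sub_pow hq1 (Nat.Odd.sub_odd hq odd_one).two_dvd
        hq.not_two_dvd_nat n.succ_ne_zero hn
      rw [one_pow, he] at h
      have h1 : (n + 1) / 2 = n / 2 + 1 := by grind
      rw [h1]
      linarith
    · have h1 : (n + 1) / 2 = n / 2 := by grind
      have h2 : padicValNat 2 (n + 1) = 0 :=
        padicValNat.eq_zero_of_not_dvd hn.not_two_dvd_nat
      rw [padicValNat_two_pow_sub_one_of_odd hq hq1 hn, h1, h2]
      ring

theorem odd_iff_of_mul_factorial_eq {q n m : ℕ} (hq : Odd q) (hq1 : 1 < q) (hn : 2 ≤ n)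
    (h : m * (n.factorial * (q - 1) ^ n) = ∏ i : Fin n, (q ^ n - q ^ (i : ℕ))) :
    Odd m ↔ q % 4 = 1 := by
  have hpow (j : ℕ) : q ^ (j + 1) - 1 ≠ 0 := (Nat.sub_pos_of_lt (Nat.one_lt_pow (by lia) hq1)).ne'
  have h1 : ∏ i : Fin n, (q ^ n - q ^ (i : ℕ)) =
      (∏ i ∈ Finset.range n, q ^ i) * ∏ j ∈ Finset.range n, (q ^ (j + 1) - 1) := by
    rw [Fin.prod_univ_eq_prod_range (fun i => q ^ n - q ^ i),
      ← Finset.prod_range_reflect (fun j => q ^ (j + 1) - 1), ← Finset.prod_mul_distrib]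
    refine Finset.prod_congr rfl fun i hi => ?_
    rw [Finset.mem_range] at hi
    rw [Nat.mul_sub, ← pow_add, mul_one]
    congr 2
    lia
  have hodd : Odd (∏ i ∈ Finset.range n, q ^ i) :=
    Finset.prod_induction _ Odd (fun _ _ => Odd.mul) odd_one fun i _ => hq.pow
  have hm : m ≠ 0 := by
    rintro rfl
    rw [zero_mul, h1] at h
    exact mul_ne_zero hodd.pos.ne' (Finset.prod_ne_zero_iff.mpr fun j _ => hpow j) h.symm
  obtain ⟨e, he⟩ : ∃ e, padicValNat 2 (q + 1) = e + 1 :=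
    Nat.exists_eq_add_of_le'
      (one_le_padicValNat_of_dvd q.succ_ne_zero (hq.add_odd odd_one).two_dvd)
  have hv := congrArg (padicValNat 2) h
  rw [h1, padicValNat.mul hm (mul_ne_zero n.factorial_ne_zero (pow_ne_zero _ (by lia))),
    padicValNat.mul n.factorial_ne_zero (pow_ne_zero _ (by lia)), padicValNat.pow,
    padicValNat.mul hodd.pos.ne' (Finset.prod_ne_zero_iff.mpr fun j _ => hpow j),
    padicValNat.eq_zero_of_not_dvd hodd.not_two_dvd_nat, zero_add,
    padicValNat_two_prod_pow_sub_one hq hq1 he] at hv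
  have hv' : padicValNat 2 m = n / 2 * e := by linarith
  have h4 : e = 0 ↔ q % 4 = 1 := by
    have := (padicValNat_dvd_iff_le (p := 2) (n := 2) q.succ_ne_zero)
    rw [Nat.succ_eq_add_one, he] at this
    obtain ⟨k, rfl⟩ := hq
    constructor
    · intro h
      by_contra h'
      have := this.mp (by lia)
      lia
    · intro h
      by_contra h'
      have := this.mpr (by lia)
      lia
  rw [← h4, ← Nat.not_even_iff_odd, even_iff_two_dvd, dvd_iff_padicValNat_ne_zero hm, hv']
  have : n / 2 ≠ 0 := by lia
  simp [this]

variable {ι F : Type*} [DecidableEq ι] [Fintype ι] [Field F]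

/-- Multiplying a column by a unit turns a matrix of determinant one into one of any nonzero
determinant. -/
theorem card_specialLinearGroup_mul_card_units (o : ι) (P : Matrix ι ι F → Prop)
    (hP : ∀ A (c : F), c ≠ 0 → P A → P (A * diagonal (Function.update 1 o c))) :
    Nat.card {A : SpecialLinearGroup ι F // P A.1} * Nat.card Fˣ =
      Nat.card {A : Matrix ι ι F // A.det ≠ 0 ∧ P A} := by
  rw [← Nat.card_prod]
  have hdet (c : F) : (diagonal (Function.update (1 : ι → F) o c)).det = c := by
    rw [det_diagonal, Finset.prod_update_of_mem (Finset.mem_univ o)]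
    simp
  have hmul (c d : F) : diagonal (Function.update (1 : ι → F) o c) *
      diagonal (Function.update (1 : ι → F) o d) = diagonal (Function.update 1 o (c * d)) := by
    rw [diagonal_mul_diagonal]
    congr 1
    ext k
    by_cases hk : k = o
    · subst hk; simp
    · simp [hk]
  have hone : diagonal (Function.update (1 : ι → F) o 1) = 1 := by
    rw [Function.update_eq_self_iff.mpr (by simp)]
    exact diagonal_one
  refine Nat.card_congr
    { toFun := fun x => ⟨x.1.1.1 * diagonal (Function.update 1 o (x.2 : F)), ?_, ?_⟩
      invFun := fun A => ⟨⟨⟨A.1 * diagonal (Function.update 1 o (A.1.det)⁻¹), ?_⟩, ?_⟩,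
        Units.mk0 A.1.det A.2.1⟩
      left_inv := ?_
      right_inv := ?_ }
  · rw [det_mul, hdet, x.1.1.det_coe, one_mul]
    exact x.2.ne_zero
  · exact hP _ _ x.2.ne_zero x.1.2
  · rw [det_mul, hdet, mul_inv_cancel₀ A.2.1]
  · exact hP _ _ (inv_ne_zero A.2.1) A.2.2
  · rintro ⟨⟨A, hA⟩, c⟩
    have hc : (A.1 * diagonal (Function.update 1 o (c : F))).det = c := by
      rw [det_mul, hdet, A.det_coe, one_mul]
    refine Prod.ext (Subtype.ext (Subtype.ext ?_)) (Units.ext hc)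
    simp only [hc]
    rw [mul_assoc, hmul, mul_inv_cancel₀ c.ne_zero, hone, mul_one]
  · rintro ⟨A, hA, hPA⟩
    refine Subtype.ext ?_
    simp only [Units.val_mk0]
    rw [mul_assoc, hmul, inv_mul_cancel₀ hA, hone, mul_one]

theorem card_isMonomialMatrix [Fintype F] :
    Nat.card {A : Matrix ι ι F // A.det ≠ 0 ∧ IsMonomialMatrix A} =
      (Fintype.card ι).factorial * (Fintype.card F - 1) ^ Fintype.card ι := by
  classical
  have : Nat.card (Equiv.Perm ι × (ι → Fˣ)) =
      (Fintype.card ι).factorial * (Fintype.card F - 1) ^ Fintype.card ι := by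
    rw [Nat.card_eq_fintype_card, Fintype.card_prod, Fintype.card_perm, Fintype.card_fun,
      Fintype.card_units]
  rw [← this]
  refine (Nat.card_congr (Equiv.ofBijective (fun x => ⟨monomialMatrix x.1 fun j => (x.2 j : F),
    det_monomialMatrix_ne_zero _ fun j => (x.2 j).ne_zero, _, _, fun j => (x.2 j).ne_zero, rfl⟩)
    ⟨?_, ?_⟩)).symm
  · rintro ⟨σ, d⟩ ⟨τ, e⟩ h
    have h := congrArg Subtype.val h
    obtain rfl : σ = τ := monomialMatrix_injective (fun j => (d j).ne_zero) h
    refine Prod.ext rfl (funext fun j => Units.ext ?_)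
    simpa [monomialMatrix_apply] using congrFun (congrFun h (σ j)) j
  · rintro ⟨A, hA, σ, d, hd, rfl⟩
    exact ⟨⟨σ, fun j => Units.mk0 (d j) (hd j)⟩, rfl⟩

theorem index_monomialSubgroup_mul [Fintype F] {n : ℕ} (hn : 0 < n) :
    (monomialSubgroup (Fin n) F).index * (n.factorial * (Fintype.card F - 1) ^ n) =
      ∏ i : Fin n, (Fintype.card F ^ n - Fintype.card F ^ (i : ℕ)) := by
  have hH := card_specialLinearGroup_mul_card_units (F := F) (⟨0, hn⟩ : Fin n) IsMonomialMatrix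
    fun A c hc hA => hA.mul ⟨1, Function.update 1 ⟨0, hn⟩ c, fun j => by
      by_cases hj : j = ⟨0, hn⟩
      · subst hj; simpa using hc
      · simp [hj], (monomialMatrix_one_eq_diagonal _).symm⟩
  have hG := card_specialLinearGroup_mul_card_units (F := F) (⟨0, hn⟩ : Fin n) (fun _ => True)
    fun _ _ _ _ => trivial
  rw [card_isMonomialMatrix, Fintype.card_fin] at hH
  have hGL : Nat.card {A : Matrix (Fin n) (Fin n) F // A.det ≠ 0 ∧ True} =
      Nat.card (GL (Fin n) F) :=
    Nat.card_congr
      { toFun := fun A => Matrix.GeneralLinearGroup.mkOfDetNeZero A.1 A.2.1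
        invFun := fun A => ⟨A.1, ((isUnit_iff_isUnit_det _).mp A.isUnit).ne_zero, trivial⟩
        left_inv := fun A => rfl
        right_inv := fun A => Units.ext rfl }
  rw [hGL, card_GL_field, Nat.card_congr (Equiv.subtypeUnivEquiv fun _ => trivial),
    ← (monomialSubgroup (Fin n) F).index_mul_card, mul_assoc] at hG
  rw [← hH, ← hG]
  rfl

theorem odd_index_monomialSubgroup_iff [Fintype F] (hF : Odd (Fintype.card F)) {n : ℕ}
    (hn : 2 ≤ n) : Odd (monomialSubgroup (Fin n) F).index ↔ Fintype.card F % 4 = 1 :=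
  odd_iff_of_mul_factorial_eq hF Fintype.one_lt_card hn (index_monomialSubgroup_mul (by lia))

end Index

/-- for `q` an odd prime power, `|F| = q` and `n ≥ 2`, the image in `PSLₙ(F)`
of the setwise stabilizer in `SL(n, F)` of the set of coordinate lines of `Fⁿ` is a maximal
subgroup of odd index iff `q ≡ 1 (mod 4)`, `(n, q) ≠ (4, 5)`, and `q ≥ 13` when `n = 2`. -/
theorem psl_coordinate_lines_stabilizer_maximal_odd_index_iff (q : ℕ) (hq_odd : Odd q)
    (hq_pp : IsPrimePow q) (F : Type) [Field F] [Fintype F] (hF : Fintype.card F = q)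
    (n : ℕ) (hn : 2 ≤ n) :
    (IsCoatom (Subgroup.map
        (QuotientGroup.mk' (Subgroup.center (Matrix.SpecialLinearGroup (Fin n) F)))
        (slDecompStabilizer F n
          (Set.range fun i : Fin n => Submodule.span F {Pi.single i (1 : F)}))) ∧
      Odd (Subgroup.map
        (QuotientGroup.mk' (Subgroup.center (Matrix.SpecialLinearGroup (Fin n) F)))
        (slDecompStabilizer F n
          (Set.range fun i : Fin n => Submodule.span F {Pi.single i (1 : F)}))).index) ↔
      q % 4 = 1 ∧ ¬(n = 4 ∧ q = 5) ∧ (n = 2 → 13 ≤ q) := by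
  subst hF
  have h2 : (2 : F) ≠ 0 := by
    refine Ring.two_ne_zero fun h => ?_
    exact Nat.not_even_iff_odd.mpr hq_odd
      (Nat.even_iff.mpr (FiniteField.even_card_iff_char_two.mp h))
  rw [slDecompStabilizer_coordinate_lines, isCoatom_map_mk_iff center_le_monomialSubgroup,
    Subgroup.index_map_eq _ (QuotientGroup.mk'_surjective _)
      (by rw [QuotientGroup.ker_mk']; exact center_le_monomialSubgroup),
    odd_index_monomialSubgroup_iff hq_odd hn]
  constructor
  · rintro ⟨hmax, hq⟩
    refine ⟨hq, ?_, ?_⟩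
    · rintro ⟨rfl, h5⟩
      obtain ⟨M, hM, hM'⟩ := exists_between_monomialSubgroup_fin_four h5
      exact hM' (hmax.2 M hM)
    · rintro rfl
      by_contra! hlt
      obtain ⟨i, hi⟩ := FiniteField.isSquare_neg_one_iff.mpr (show Fintype.card F % 4 ≠ 3 by lia)
      have h8 (a : F) (ha : a ≠ 0) : a ^ 8 = 1 := by
        have hpow := FiniteField.pow_card_sub_one_eq_one a ha
        have h1 : 1 < Fintype.card F := Fintype.one_lt_card
        obtain h | h : Fintype.card F = 5 ∨ Fintype.card F = 9 := by lia
        · rw [h] at hpow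
          exact (pow_mul a 4 2).trans (by rw [hpow, one_pow])
        · rwa [h] at hpow
      obtain ⟨M, hM, hM'⟩ :=
        exists_between_monomialSubgroup_fin_two h2 h8 (show i ^ 2 = -1 by rw [hi, sq])
      exact hM' (hmax.2 M hM)
  · rintro ⟨hq, h4, h13⟩
    exact ⟨isCoatom_monomialSubgroup hq (by simpa using hn) (by simpa using h4)
      (by simpa using h13) h2, hq⟩
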